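/- arXiv:1502.01840 — 3 statements merged into one kernel-verified Lean document; each statement's English description precedes it below -/
import Mathlib

section
/- Under assumptions (C1)-(C3) on the family (A_ε), if ψ_ε → ψ_0 weakly in X and τ_ε → τ_0 > 0, then T^ε_{τ_ε} ψ_ε → T^0_{τ_0} ψ_0 strongly in X. -/
open MeasureTheory Filter
open scoped RealInnerProductSpace

/-- A contraction semigroup generated by `-K⁻¹`, `K` symmetric positive injective. -/
structure SGpair {X : Type*} [NormedAddCommGroup X] [InnerProductSpace ℝ X]
    (T : ℝ → X →L[ℝ] X) (K : X →L[ℝ] X) : Prop where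
  sym : ∀ x y, ⟪K x, y⟫ = ⟪x, K y⟫
  pos : ∀ x, 0 ≤ ⟪K x, x⟫
  inj : ∀ x, K x = 0 → x = 0
  T0 : T 0 = 1
  add : ∀ s t : ℝ, 0 ≤ s → 0 ≤ t → T (s + t) = (T s).comp (T t)
  cont : ∀ x : X, Continuous fun t => T t x
  contr : ∀ t : ℝ, 0 ≤ t → ‖T t‖ ≤ 1
  gen : ∀ x : X, ∀ t : ℝ, 0 ≤ t → HasDerivAt (fun s => T s (K x)) (-(T t x)) t

namespace SGpair

variable {X : Type*} [NormedAddCommGroup X] [InnerProductSpace ℝ X] [CompleteSpace X]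
  {T : ℝ → X →L[ℝ] X} {K : X →L[ℝ] X}

theorem le (h : SGpair T K) {t : ℝ} (ht : 0 ≤ t) (x : X) : ‖T t x‖ ≤ ‖x‖ := by
  simpa using (T t).le_of_opNorm_le (h.contr t ht) x

theorem fixed_zero (h : SGpair T K) (q : X) (hq : ∀ t : ℝ, 0 ≤ t → T t q = q) : q = 0 := by
  have hadj : ∀ t : ℝ, 0 ≤ t → ∀ x, ⟪T t x, q⟫ = ⟪x, q⟫ := by
    intro t ht x
    have h1 : ContinuousLinearMap.adjoint (T t) q = q := by
      have h2 : ‖ContinuousLinearMap.adjoint (T t) q‖ ≤ ‖q‖ := by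
        have h3 : ‖ContinuousLinearMap.adjoint (T t)‖ ≤ 1 := by
          rw [LinearIsometryEquiv.norm_map]; exact h.contr t ht
        simpa using (ContinuousLinearMap.adjoint (T t)).le_of_opNorm_le h3 q
      have h4 : ‖ContinuousLinearMap.adjoint (T t) q - q‖ ^ 2 ≤ 0 := by
        rw [norm_sub_sq_real, ContinuousLinearMap.adjoint_inner_left, hq t ht,
          real_inner_self_eq_norm_sq]
        nlinarith [norm_nonneg (ContinuousLinearMap.adjoint (T t) q), norm_nonneg q]
      have h5 : ‖ContinuousLinearMap.adjoint (T t) q - q‖ = 0 := by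
        nlinarith [norm_nonneg (ContinuousLinearMap.adjoint (T t) q - q)]
      exact sub_eq_zero.1 (norm_eq_zero.1 h5)
    rw [← ContinuousLinearMap.adjoint_inner_right, h1]
  have hd : HasDerivWithinAt (fun s => ⟪T s (K q), q⟫) (⟪-(T 0 q), q⟫) (Set.Ici 0) 0 := by
    have := ((h.gen q 0 le_rfl).hasDerivWithinAt (s := Set.Ici 0)).inner ℝ
      (hasDerivWithinAt_const (0:ℝ) (Set.Ici 0) q)
    simpa using this
  have hc : HasDerivWithinAt (fun s => ⟪T s (K q), q⟫) 0 (Set.Ici (0:ℝ)) 0 := by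
    refine (hasDerivWithinAt_const (0:ℝ) (Set.Ici 0) ⟪K q, q⟫).congr (fun s hs => hadj s hs _)
      (hadj 0 le_rfl _)
  have := (uniqueDiffWithinAt_Ici (0:ℝ)).eq_deriv _ hd hc
  rw [h.T0] at this
  simpa using this

theorem comm (h : SGpair T K) {s : ℝ} (hs : 0 ≤ s) (x : X) : T s (K x) = K (T s x) := by
  have key : ∀ t : ℝ, 0 ≤ t → T t (T s (K x) - K (T s x)) = T s (K x) - K (T s x) := by
    intro t ht
    have hder : ∀ r : ℝ, 0 ≤ r →
        HasDerivAt (fun r => T (r + s) (K x) - T r (K (T s x))) 0 r := by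
      intro r hr
      have h1 := HasDerivAt.comp_add_const r s (h.gen x (r + s) (by positivity))
      have h2 := h1.sub (h.gen (T s x) r hr)
      refine HasDerivAt.congr_deriv h2 ?_
      rw [h.add r s hr hs]; simp
    have := constant_of_has_deriv_right_zero (a := 0) (b := t)
      (f := fun r => T (r + s) (K x) - T r (K (T s x)))
      (fun r hr => (hder r hr.1).continuousAt.continuousWithinAt)
      (fun r hr => (hder r hr.1).hasDerivWithinAt) t ⟨ht, le_rfl⟩
    simp only [h.add t s ht hs, zero_add, h.T0] at this
    simpa using this
  exact sub_eq_zero.1 (h.fixed_zero _ key)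

theorem dense (h : SGpair T K) : DenseRange K := by
  have : (LinearMap.range (K : X →ₗ[ℝ] X)).topologicalClosure = ⊤ := by
    rw [Submodule.topologicalClosure_eq_top_iff, Submodule.eq_bot_iff]
    intro y hy
    apply h.inj
    have := (Submodule.mem_orthogonal _ _).1 hy (K (K y)) ⟨K y, rfl⟩
    rw [h.sym] at this
    exact inner_self_eq_zero.1 this
  have h2 := Submodule.dense_iff_topologicalClosure_eq_top.2 this
  simpa [DenseRange, LinearMap.coe_range] using h2

theorem smoothing (h : SGpair T K) {t : ℝ} (ht : 0 ≤ t) (w : X) : t * ‖T t w‖ ≤ ‖K w‖ := by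
  refine h.dense.induction_on (p := fun w => t * ‖T t w‖ ≤ ‖K w‖) w
    (isClosed_le (by fun_prop) (by fun_prop)) ?_
  intro z
  let F : ℝ → ℝ := fun s => ⟪T s (K (K z)), T s (K (K z))⟫ + 2 * (s * ⟪T s (K z), T s (K (K z))⟫)
    + 2 * (s * s * ⟪T s (K z), T s (K z)⟫)
  have hF : ∀ s : ℝ, 0 ≤ s → HasDerivAt F (-(4 * s ^ 2 * ⟪K (T s z), T s z⟫)) s := by
    intro s hs
    have hv := h.gen (K z) s hs
    have hg := h.gen z s hs
    have h1 := hv.inner ℝ hv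
    have h2 := ((hasDerivAt_id s).mul (hg.inner ℝ hv)).const_mul 2
    have h3 := (((hasDerivAt_id s).mul (hasDerivAt_id s)).mul (hg.inner ℝ hg)).const_mul 2
    refine HasDerivAt.congr_deriv ((h1.add h2).add h3) ?_
    have e1 : ⟪T s z, K (K (T s z))⟫ = ⟪K (T s z), K (T s z)⟫ := (h.sym _ _).symm
    have e2 : ⟪K (K (T s z)), K (T s z)⟫ = ⟪K (T s z), K (K (T s z))⟫ := real_inner_comm _ _
    have e3 : ⟪T s z, K (T s z)⟫ = ⟪K (T s z), T s z⟫ := real_inner_comm _ _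
    simp only [h.comm hs, inner_neg_left, inner_neg_right, id, e1, e2, e3]
    simp
    ring
  have hanti : AntitoneOn F (Set.Icc 0 t) := by
    refine antitoneOn_of_deriv_nonpos (convex_Icc 0 t)
      (fun s hs => (hF s hs.1).continuousAt.continuousWithinAt) ?_ ?_
    · intro s hs
      rw [interior_Icc] at hs
      exact (hF s hs.1.le).differentiableAt.differentiableWithinAt
    · intro s hs
      rw [interior_Icc] at hs
      rw [(hF s hs.1.le).deriv]
      have := h.pos (T s z)
      have : 0 ≤ 4 * s ^ 2 * ⟪K (T s z), T s z⟫ := by positivity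
      linarith
  have hle := hanti ⟨le_rfl, ht⟩ ⟨ht, le_rfl⟩ ht
  have hE : 0 ≤ ⟪T t (K z), T t (K (K z))⟫ := by
    rw [h.comm ht (K z), ← h.sym]; exact h.pos _
  simp only [F, h.T0, one_apply_eq_self, real_inner_self_eq_norm_sq] at hle
  have hE2 := mul_nonneg ht hE
  refine abs_le_of_sq_le_sq' ?_ (norm_nonneg _) |>.2
  nlinarith [sq_nonneg ‖T t (K (K z))‖, sq_nonneg (t * ‖T t (K z)‖),
    norm_nonneg (K (K z))]

/-- Duhamel estimate. -/
theorem duhamel {T' : ℝ → X →L[ℝ] X} {K' : X →L[ℝ] X} (h : SGpair T K) (h' : SGpair T' K')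
    (y : X) {t : ℝ} (ht : 0 ≤ t) {C : ℝ}
    (hC : ∀ s ∈ Set.Icc 0 t, ‖K (T s y) - K' (T s y)‖ ≤ C) :
    ‖T' t (K' (K y)) - K' (T t (K y))‖ ≤ C * t := by
  let G : ℝ → X := fun s => T' (t - s) (K' (T s (K y)))
  have gder : ∀ s ∈ Set.Ico 0 t, HasDerivAt G (T' (t - s) (K (T s y) - K' (T s y))) s := by
    intro s hs
    have hts : 0 < t - s := by linarith [hs.2]
    have hu := h.gen y s hs.1
    have h1 : HasDerivAt (fun r => T' (t - r) (K' (T s (K y)))) (T' (t - s) (T s (K y))) s := by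
      have := HasDerivAt.comp_const_sub t s (h'.gen (T s (K y)) (t - s) hts.le)
      simpa using this
    have h2 : HasDerivAt (fun r => T' (t - r) (K' (T r (K y) - T s (K y))))
        (-(T' (t - s) (K' (T s y)))) s := by
      rw [hasDerivAt_iff_tendsto_slope]
      have hq : Tendsto (fun r => K' (slope (fun r => T r (K y)) s r)) (nhdsWithin s {s}ᶜ)
          (nhds (K' (-(T s y)))) :=
        (K'.continuous.tendsto _).comp (hasDerivAt_iff_tendsto_slope.1 hu)
      have ha : Tendsto (fun r => T' (t - r) (K' (-(T s y)))) (nhdsWithin s {s}ᶜ)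
          (nhds (T' (t - s) (K' (-(T s y))))) :=
        (((h'.cont (K' (-(T s y)))).comp (continuous_const.sub continuous_id)).tendsto s).mono_left
          nhdsWithin_le_nhds
      have hb : Tendsto (fun r => T' (t - r) (K' (slope (fun r => T r (K y)) s r)
          - K' (-(T s y)))) (nhdsWithin s {s}ᶜ) (nhds 0) := by
        have h0 := (tendsto_sub_nhds_zero_iff.2 hq).norm
        rw [norm_zero] at h0
        refine squeeze_zero_norm' ?_ h0
        have : ∀ᶠ r in nhdsWithin s {s}ᶜ, r < t :=
          nhdsWithin_le_nhds (Iio_mem_nhds hs.2)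
        filter_upwards [this] with r hr
        exact h'.le (by linarith) _
      have hab := ha.add hb
      rw [add_zero] at hab
      simp only [map_neg] at hab
      refine hab.congr fun r => ?_
      simp [slope, map_smul]
    convert h1.add h2 using 1
    · funext r
      simp [G]
    · rw [map_sub, h.comm hs.1, sub_eq_add_neg]
  have gcont : ContinuousOn G (Set.Icc 0 t) := by
    intro s hs
    have hc : Tendsto (fun r => K' (T r (K y))) (nhdsWithin s (Set.Icc 0 t))
        (nhds (K' (T s (K y)))) :=
      ((K'.continuous.comp (h.cont (K y))).tendsto s).mono_left nhdsWithin_le_nhds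
    have ha : Tendsto (fun r => T' (t - r) (K' (T s (K y)))) (nhdsWithin s (Set.Icc 0 t))
        (nhds (G s)) :=
      (((h'.cont _).comp (continuous_const.sub continuous_id)).tendsto s).mono_left
          nhdsWithin_le_nhds
    have hb : Tendsto (fun r => T' (t - r) (K' (T r (K y)) - K' (T s (K y))))
        (nhdsWithin s (Set.Icc 0 t)) (nhds 0) := by
      have h0 := (tendsto_sub_nhds_zero_iff.2 hc).norm
      rw [norm_zero] at h0
      refine squeeze_zero_norm' ?_ h0
      filter_upwards [self_mem_nhdsWithin] with r hr
      exact h'.le (by linarith [hr.2]) _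
    have hab := ha.add hb
    rw [add_zero] at hab
    refine hab.congr fun r => ?_
    simp [G]
  have := norm_image_sub_le_of_norm_deriv_right_le_segment (C := C) gcont
    (fun s hs => (gder s hs).hasDerivWithinAt)
    (fun s hs => (h'.le (by linarith [hs.2]) _).trans (hC s ⟨hs.1, hs.2.le⟩)) t ⟨ht, le_rfl⟩
  rw [norm_sub_rev] at this
  simpa [G, h.T0, h'.T0] using this

end SGpair

section aux

variable {X : Type*} [NormedAddCommGroup X] [InnerProductSpace ℝ X] [CompleteSpace X]

theorem aux_unif {K : ℝ → X →L[ℝ] X} {l : Filter ℝ} {B : ℝ}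
    (hB : ∀ᶠ ε in l, ∀ x, ‖K ε x‖ ≤ B * ‖x‖) (hB0 : ∀ x, ‖K 0 x‖ ≤ B * ‖x‖) (hBpos : 0 < B)
    (hK : ∀ x, Tendsto (fun ε => K ε x) l (nhds (K 0 x)))
    (u : ℝ → X) (hu : Continuous u) (M : ℝ) {δ : ℝ} (hδ : 0 < δ) :
    ∀ᶠ ε in l, ∀ s ∈ Set.Icc 0 M, ‖K 0 (u s) - K ε (u s)‖ ≤ δ := by
  refine (isCompact_Icc (a := (0:ℝ)) (b := M)).induction_on
    (p := fun S => ∀ᶠ ε in l, ∀ s ∈ S, ‖K 0 (u s) - K ε (u s)‖ ≤ δ) ?_ ?_ ?_ ?_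
  · simp
  · intro S S' hSS h
    filter_upwards [h] with ε hε s hs using hε s (hSS hs)
  · intro S S' h h'
    filter_upwards [h, h'] with ε hε hε' s hs
    exact hs.elim (hε s) (hε' s)
  · intro s _
    refine ⟨{r | ‖u r - u s‖ < δ / (4 * B)}, ?_, ?_⟩
    · apply nhdsWithin_le_nhds
      have : Tendsto (fun r => ‖u r - u s‖) (nhds s) (nhds 0) := by
        have := (tendsto_sub_nhds_zero_iff.2 (hu.tendsto s)).norm
        simpa using this
      exact this.eventually (gt_mem_nhds (by positivity))
    · have h1 : Tendsto (fun ε => ‖K ε (u s) - K 0 (u s)‖) l (nhds 0) := by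
        have := (tendsto_sub_nhds_zero_iff.2 (hK (u s))).norm
        simpa using this
      filter_upwards [hB, h1.eventually (gt_mem_nhds (show (0:ℝ) < δ / 2 by positivity))]
        with ε hε h2 r hr
      have e : K 0 (u r) - K ε (u r) = K 0 (u r - u s) - K ε (u r - u s)
          - (K ε (u s) - K 0 (u s)) := by simp only [map_sub]; abel
      have hr' : B * ‖u r - u s‖ ≤ δ / 4 := by
        have : ‖u r - u s‖ < δ / (4 * B) := hr
        rw [lt_div_iff₀ (by positivity)] at this
        linarith
      rw [e]
      have a1 := norm_sub_le (K 0 (u r - u s) - K ε (u r - u s)) (K ε (u s) - K 0 (u s))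
      have a2 := norm_sub_le (K 0 (u r - u s)) (K ε (u r - u s))
      have a3 := hε (u r - u s)
      have a4 := hB0 (u r - u s)
      linarith

theorem aux_trotter {T : ℝ → ℝ → X →L[ℝ] X} {K : ℝ → X →L[ℝ] X} {l : Filter ℝ} {B : ℝ}
    (h0 : SGpair (T 0) (K 0)) (h : ∀ᶠ ε in l, SGpair (T ε) (K ε))
    (hB : ∀ᶠ ε in l, ∀ x, ‖K ε x‖ ≤ B * ‖x‖) (hB0 : ∀ x, ‖K 0 x‖ ≤ B * ‖x‖) (hBpos : 0 < B)
    (hK : ∀ x, Tendsto (fun ε => K ε x) l (nhds (K 0 x)))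
    (τ : ℝ → ℝ) {t : ℝ} (ht : 0 < t) (hτ : Tendsto τ l (nhds t)) (x : X) :
    Tendsto (fun ε => T ε (τ ε) x) l (nhds (T 0 t x)) := by
  have hτpos : ∀ᶠ ε in l, 0 < τ ε := hτ.eventually (lt_mem_nhds ht)
  -- the convergence on the dense set
  have key : ∀ y, Tendsto (fun ε => T ε (τ ε) (K 0 (K 0 y))) l (nhds (T 0 t (K 0 (K 0 y)))) := by
    intro y
    have h1 : Tendsto (fun ε => T ε (τ ε) (K 0 (K 0 y)) - T ε (τ ε) (K ε (K 0 y))) l (nhds 0) := by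
      have hq : Tendsto (fun ε => ‖K 0 (K 0 y) - K ε (K 0 y)‖) l (nhds 0) := by
        have := ((tendsto_const_nhds (x := K 0 (K 0 y))).sub (hK (K 0 y))).norm
        simpa using this
      refine squeeze_zero_norm' ?_ hq
      filter_upwards [h, hτpos] with ε hε hp
      rw [← map_sub]
      exact hε.le hp.le _
    have h2 : Tendsto (fun ε => T ε (τ ε) (K ε (K 0 y)) - K ε (T 0 (τ ε) (K 0 y))) l (nhds 0) := by
      rw [tendsto_zero_iff_norm_tendsto_zero, Metric.tendsto_nhds]
      intro η hη
      have hu := aux_unif hB hB0 hBpos hK (fun s => T 0 s y) (h0.cont y) (t + 1)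
        (δ := η / (2 * (t + 1))) (by positivity)
      filter_upwards [h, hτpos, hu, hτ.eventually (gt_mem_nhds (lt_add_one t))] with ε hε hp hu' hlt
      have := h0.duhamel hε y hp.le (C := η / (2 * (t + 1)))
        (fun s hs => hu' s ⟨hs.1, hs.2.trans hlt.le⟩)
      rw [Real.dist_eq, sub_zero, abs_of_nonneg (norm_nonneg _)]
      have h3 : η / (2 * (t + 1)) * τ ε ≤ η / (2 * (t + 1)) * (t + 1) := by gcongr
      have h4 : η / (2 * (t + 1)) * (t + 1) = η / 2 := by field_simp
      linarith
    have h3 : Tendsto (fun ε => K ε (T 0 (τ ε) (K 0 y))) l (nhds (K 0 (T 0 t (K 0 y)))) := by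
      have hc := ((h0.cont (K 0 y)).tendsto t).comp hτ
      have ha : Tendsto (fun ε => K ε (T 0 (τ ε) (K 0 y) - T 0 t (K 0 y))) l (nhds 0) := by
        have hq : Tendsto (fun ε => B * ‖T 0 (τ ε) (K 0 y) - T 0 t (K 0 y)‖) l (nhds 0) := by
          have := ((tendsto_sub_nhds_zero_iff.2 hc).norm).const_mul B
          simpa using this
        refine squeeze_zero_norm' ?_ hq
        filter_upwards [hB] with ε hε using hε _
      have := ha.add (hK (T 0 t (K 0 y)))
      simpa using this
    have := (h1.add h2).add h3
    rw [h0.comm ht.le]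
    simpa using this
  have hd : DenseRange (fun y => K 0 (K 0 y)) := h0.dense.comp h0.dense (K 0).continuous
  rw [Metric.tendsto_nhds]
  intro η hη
  obtain ⟨y, hy⟩ := hd.exists_dist_lt x (show 0 < η / 3 by positivity)
  filter_upwards [h, hτpos, (Metric.tendsto_nhds.1 (key y)) (η / 3) (by positivity)]
    with ε hε hp h3
  rw [dist_eq_norm] at *
  have e : T ε (τ ε) x - T 0 t x = T ε (τ ε) (x - K 0 (K 0 y))
    + (T ε (τ ε) (K 0 (K 0 y)) - T 0 t (K 0 (K 0 y))) - T 0 t (x - K 0 (K 0 y)) := by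
    simp only [map_sub]; abel
  rw [e]
  have a1 := norm_sub_le (T ε (τ ε) (x - K 0 (K 0 y))
    + (T ε (τ ε) (K 0 (K 0 y)) - T 0 t (K 0 (K 0 y)))) (T 0 t (x - K 0 (K 0 y)))
  have a2 := norm_add_le (T ε (τ ε) (x - K 0 (K 0 y)))
    (T ε (τ ε) (K 0 (K 0 y)) - T 0 t (K 0 (K 0 y)))
  have a3 := hε.le hp.le (x - K 0 (K 0 y))
  have a4 := h0.le ht.le (x - K 0 (K 0 y))
  linarith

theorem aux_bdd (w : ℕ → X) (hw : ∀ φ : X, Tendsto (fun n => ⟪w n, φ⟫) atTop (nhds 0)) :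
    ∃ C, ∀ n, ‖w n‖ ≤ C := by
  have := banach_steinhaus (g := fun n => innerSL ℝ (w n)) (fun φ => by
    obtain ⟨C, hC⟩ := (hw φ).norm.bddAbove_range
    exact ⟨C, fun n => by simpa using hC ⟨n, rfl⟩⟩)
  simpa using this

theorem aux_compact (K : X →L[ℝ] X) (hK : IsCompactOperator K)
    (hsym : ∀ x y, ⟪K x, y⟫ = ⟪x, K y⟫) (w : ℕ → X)
    (hw : ∀ φ : X, Tendsto (fun n => ⟪w n, φ⟫) atTop (nhds 0)) :
    Tendsto (fun n => K (w n)) atTop (nhds 0) := by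
  obtain ⟨C, hC⟩ := aux_bdd w hw
  obtain ⟨S, hS, hsub⟩ := IsCompactOperator.image_closedBall_subset_compact (f := (K : X →ₗ[ℝ] X)) hK C
  refine hS.tendsto_nhds_of_unique_mapClusterPt
    (Eventually.of_forall fun n => hsub ⟨w n, by simpa using hC n, rfl⟩) ?_
  intro z _ hz
  have hcl : MapClusterPt ⟪z, z⟫ atTop (fun n => ⟪K (w n), z⟫) :=
    MapClusterPt.continuousAt_comp (f := fun v => ⟪v, z⟫) (by fun_prop) hz
  have ht : Tendsto (fun n => ⟪K (w n), z⟫) atTop (nhds 0) := by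
    simpa only [hsym] using hw (K z)
  have : ⟪z, z⟫ = (0:ℝ) := by
    by_contra hne
    have hd := (disjoint_nhds_nhds.2 hne).mono_right ht
    exact (hcl : NeBot _).ne hd.eq_bot
  exact inner_self_eq_zero.1 this

end aux

/-- Under assumptions (C1)-(C3) on the family `(A_ε)`, if `ψ_ε → ψ_0` weakly
in `X` and `τ_ε → τ_0 > 0`, then `T^ε_{τ_ε} ψ_ε → T^0_{τ_0} ψ_0` strongly in `X`. -/
theorem stmt3 {X X₁ U : Type*}
    [NormedAddCommGroup X] [InnerProductSpace ℝ X] [CompleteSpace X]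
    [NormedAddCommGroup X₁] [NormedSpace ℝ X₁]
    -- (C1): common domain `X₁` compactly embedded in `X`, each `A_ε` self-adjoint
    (ι : X₁ →L[ℝ] X) (hι_inj : Function.Injective ι) (hι_cpt : IsCompactOperator ι)
    (A : ℝ → X₁ →L[ℝ] X)
    (hsa : ∀ ε : ℝ, 0 ≤ ε → ∀ ψ φ : X₁, ⟪A ε ψ, ι φ⟫ = ⟪ι ψ, A ε φ⟫)
    -- (C2): `A₀` strictly positive and `m₀⟨A₀ψ,ψ⟩ ≤ ⟨A_εψ,ψ⟩ ≤ m₁⟨A₀ψ,ψ⟩`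
    (m₀ m₁ : ℝ) (hm₀ : 0 < m₀) (hm₁ : 0 < m₁)
    (hpos : ∀ ψ : X₁, ψ ≠ 0 → 0 < ⟪A 0 ψ, ι ψ⟫)
    (hcomp : ∀ ε : ℝ, 0 ≤ ε → ∀ ψ : X₁,
      m₀ * ⟪A 0 ψ, ι ψ⟫ ≤ ⟪A ε ψ, ι ψ⟫ ∧ ⟪A ε ψ, ι ψ⟫ ≤ m₁ * ⟪A 0 ψ, ι ψ⟫)
    -- (C3): strong convergence of the resolvents `A_ε⁻¹ψ → A₀⁻¹ψ`
    (Ainv : ℝ → X →L[ℝ] X₁)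
    (hAinv : ∀ ε : ℝ, 0 ≤ ε → (∀ x : X, A ε (Ainv ε x) = x) ∧ ∀ ψ : X₁, Ainv ε (A ε ψ) = ψ)
    (hres : ∀ x : X, Tendsto (fun ε => ι (Ainv ε x)) (nhdsWithin 0 (Set.Ioi 0))
      (nhds (ι (Ainv 0 x))))
    -- `T^ε` is the contraction semigroup generated by `-A_ε`
    (T : ℝ → ℝ → X →L[ℝ] X)
    (hT0 : ∀ ε : ℝ, 0 ≤ ε → T ε 0 = 1)
    (hTadd : ∀ ε : ℝ, 0 ≤ ε → ∀ s t : ℝ, 0 ≤ s → 0 ≤ t → T ε (s + t) = (T ε s).comp (T ε t))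
    (hTcont : ∀ ε : ℝ, 0 ≤ ε → ∀ x : X, Continuous fun t => T ε t x)
    (hTcontr : ∀ ε : ℝ, 0 ≤ ε → ∀ t : ℝ, 0 ≤ t → ‖T ε t‖ ≤ 1)
    (hgen : ∀ ε : ℝ, 0 ≤ ε → ∀ ψ : X₁, ∀ t : ℝ, 0 ≤ t →
      HasDerivAt (fun s => T ε s (ι ψ)) (-(T ε t (A ε ψ))) t)
    -- `ψ_ε → ψ_0` weakly in `X`
    (ψ : ℝ → X)
    (hψ : ∀ φ : X, Tendsto (fun ε => ⟪ψ ε, φ⟫) (nhdsWithin 0 (Set.Ioi 0)) (nhds ⟪ψ 0, φ⟫))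
    -- `τ_ε → τ_0 > 0`
    (τf : ℝ → ℝ) (hτpos : ∀ ε : ℝ, 0 ≤ ε → 0 < τf ε)
    (hτ : Tendsto τf (nhdsWithin 0 (Set.Ioi 0)) (nhds (τf 0))) :
    Tendsto (fun ε => T ε (τf ε) (ψ ε)) (nhdsWithin 0 (Set.Ioi 0))
      (nhds (T 0 (τf 0) (ψ 0))) := by
  classical
  set K : ℝ → X →L[ℝ] X := fun ε => ι.comp (Ainv ε) with hKdef
  have hA0nn : ∀ ξ : X₁, 0 ≤ ⟪A 0 ξ, ι ξ⟫ := by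
    intro ξ
    by_cases hξ : ξ = 0
    · simp [hξ]
    · exact (hpos ξ hξ).le
  have hsym : ∀ ε : ℝ, 0 ≤ ε → ∀ x y, ⟪K ε x, y⟫ = ⟪x, K ε y⟫ := by
    intro ε hε x y
    have := hsa ε hε (Ainv ε x) (Ainv ε y)
    rw [(hAinv ε hε).1, (hAinv ε hε).1] at this
    exact this.symm
  have hKpos : ∀ ε : ℝ, 0 ≤ ε → ∀ x, 0 ≤ ⟪K ε x, x⟫ := by
    intro ε hε x
    have h1 := (hcomp ε hε (Ainv ε x)).1
    rw [(hAinv ε hε).1, real_inner_comm (ι (Ainv ε x)) x] at h1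
    exact (mul_nonneg hm₀.le (hA0nn _)).trans h1
  have hSG : ∀ ε : ℝ, 0 ≤ ε → SGpair (T ε) (K ε) := by
    intro ε hε
    refine ⟨hsym ε hε, hKpos ε hε, ?_, hT0 ε hε, hTadd ε hε, hTcont ε hε, hTcontr ε hε, ?_⟩
    · intro x hx
      have h1 : Ainv ε x = 0 := hι_inj (by simpa [hKdef] using hx)
      rw [← (hAinv ε hε).1 x, h1, map_zero]
    · intro x t ht
      have := hgen ε hε (Ainv ε x) t ht
      rwa [(hAinv ε hε).1] at this
  have hle : ∀ ε : ℝ, 0 ≤ ε → ∀ x, m₀ * ⟪K ε x, x⟫ ≤ ⟪K 0 x, x⟫ := by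
    intro ε hε x
    have h1 := (hcomp ε hε (Ainv ε x)).1
    rw [(hAinv ε hε).1, real_inner_comm (ι (Ainv ε x)) x] at h1
    have h2 := hA0nn (m₀ • Ainv ε x - Ainv 0 x)
    have h3 := hsa 0 le_rfl (Ainv ε x) (Ainv 0 x)
    rw [(hAinv 0 le_rfl).1] at h3
    simp only [map_sub, map_smul, (hAinv 0 le_rfl).1, inner_sub_left, inner_sub_right,
      real_inner_smul_left, real_inner_smul_right, h3] at h2
    rw [real_inner_comm (ι (Ainv ε x)) x, real_inner_comm (ι (Ainv 0 x)) x] at h2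
    change m₀ * ⟪ι (Ainv ε x), x⟫ ≤ ⟪ι (Ainv 0 x), x⟫
    nlinarith
  set B : ℝ := ‖K 0‖ / m₀ + ‖K 0‖ + 1 with hBdef
  have hBpos : 0 < B := by positivity
  have hform : ∀ ε : ℝ, 0 ≤ ε → ∀ x, ‖K ε x‖ ^ 2 ≤ B * ⟪K ε x, x⟫ := by
    intro ε hε x
    have hz : ⟪K ε (K ε x), K ε x⟫ ≤ B * ‖K ε x‖ ^ 2 := by
      have h1 := hle ε hε (K ε x)
      have h2 : ⟪K 0 (K ε x), K ε x⟫ ≤ ‖K 0‖ * ‖K ε x‖ ^ 2 := by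
        refine (real_inner_le_norm _ _).trans ?_
        rw [pow_two, ← mul_assoc]
        gcongr
        exact (K 0).le_opNorm _
      have h3 : ⟪K ε (K ε x), K ε x⟫ ≤ ‖K 0‖ / m₀ * ‖K ε x‖ ^ 2 := by
        rw [div_mul_eq_mul_div, le_div_iff₀ hm₀]; linarith
      refine h3.trans ?_
      gcongr
      rw [hBdef]; linarith [norm_nonneg (K 0)]
    have h4 := hKpos ε hε (B • x - K ε x)
    have h5 : ⟪K ε (K ε x), x⟫ = ‖K ε x‖ ^ 2 := by
      rw [hsym ε hε, real_inner_self_eq_norm_sq]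
    simp only [map_sub, map_smul, inner_sub_left, inner_sub_right,
      real_inner_smul_left, real_inner_smul_right, h5, real_inner_self_eq_norm_sq] at h4
    have h6 : 0 ≤ B * (B * ⟪K ε x, x⟫ - ‖K ε x‖ ^ 2) := by nlinarith
    have := nonneg_of_mul_nonneg_right h6 hBpos
    linarith
  have hBK : ∀ ε : ℝ, 0 ≤ ε → ∀ x, ‖K ε x‖ ≤ B * ‖x‖ := by
    intro ε hε x
    have h1 := hform ε hε x
    have h2 := real_inner_le_norm (K ε x) x
    by_contra! hlt
    have h3 : 0 < ‖K ε x‖ := lt_of_le_of_lt (by positivity) hlt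
    nlinarith
  have hcmp : ∀ ε : ℝ, 0 ≤ ε → ∀ x, ‖K ε x‖ ^ 2 ≤ B / m₀ * (‖K 0 x‖ * ‖x‖) := by
    intro ε hε x
    have h1 := hform ε hε x
    have h2 : ⟪K ε x, x⟫ ≤ (‖K 0 x‖ * ‖x‖) / m₀ := by
      rw [le_div_iff₀ hm₀]
      linarith [hle ε hε x, real_inner_le_norm (K 0 x) x]
    calc _ ≤ _ := h1
      _ ≤ B * ((‖K 0 x‖ * ‖x‖) / m₀) := by gcongr
      _ = _ := by ring
  have hnn : ∀ᶠ ε in nhdsWithin (0:ℝ) (Set.Ioi 0), 0 ≤ ε := by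
    filter_upwards [self_mem_nhdsWithin] with ε hε using le_of_lt hε
  have hτ0 : 0 < τf 0 := hτpos 0 le_rfl
  have hfix := aux_trotter (T := T) (K := K) (B := B) (hSG 0 le_rfl) (hnn.mono hSG) (hnn.mono hBK)
    (hBK 0 le_rfl) hBpos hres τf hτ0 hτ (ψ 0)
  have hvar : Tendsto (fun ε => T ε (τf ε) (ψ ε - ψ 0)) (nhdsWithin 0 (Set.Ioi 0)) (nhds 0) := by
    refine tendsto_of_seq_tendsto fun e he => ?_
    have hw : ∀ φ : X, Tendsto (fun n => ⟪ψ (e n) - ψ 0, φ⟫) atTop (nhds 0) := by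
      intro φ
      have := (tendsto_sub_nhds_zero_iff.2 (hψ φ)).comp he
      simpa only [inner_sub_left, Function.comp_def] using this
    obtain ⟨C, hC⟩ := aux_bdd _ hw
    have hK0 := aux_compact (K 0) (hι_cpt.comp_clm (Ainv 0)) (hsym 0 le_rfl) _ hw
    have hK1 : Tendsto (fun n => B / m₀ * (‖K 0 (ψ (e n) - ψ 0)‖ * C)) atTop (nhds 0) := by
      have := ((hK0.norm.mul_const C).const_mul (B / m₀))
      simpa using this
    have hKe : Tendsto (fun n => Real.sqrt (B / m₀ * (‖K 0 (ψ (e n) - ψ 0)‖ * C)) / τf (e n))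
        atTop (nhds 0) := by
      have := (hK1.sqrt).div (hτ.comp he) hτ0.ne'
      rw [Real.sqrt_zero, zero_div] at this
      exact this
    refine squeeze_zero_norm' ?_ hKe
    filter_upwards [he.eventually hnn] with n hn
    have hp := hτpos (e n) hn
    simp only [Function.comp]
    rw [le_div_iff₀ hp, mul_comm]
    refine ((hSG _ hn).smoothing hp.le _).trans ?_
    apply Real.le_sqrt_of_sq_le
    refine (hcmp _ hn _).trans ?_
    gcongr
    exact hC n
  have := hvar.add hfix
  simpa using this
end

section
/- (Bang-bang property.) Assume the unique continuation property: if B*T*_t η = 0 for all t in a set of positive measure, then η = 0. Then any time optimal control u* for (TP)^M satisfies ||u*(t)||_U = M for almost every t ∈ (0, τ*(M)), and the optimal control is unique. -/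
open MeasureTheory Filter

/-- The state trajectory `z(t;ψ,u) = T_t ψ + ∫_0^t T_{t-σ} B u(σ) dσ`. -/
noncomputable def traj {X U : Type*} [NormedAddCommGroup X] [NormedSpace ℝ X] [CompleteSpace X]
    [NormedAddCommGroup U] [NormedSpace ℝ U]
    (T : ℝ → X →L[ℝ] X) (B : U →L[ℝ] X) (ψ : X) (u : ℝ → U) (t : ℝ) : X :=
  T t ψ + ∫ σ in Set.Ioc 0 t, T (t - σ) (B (u σ))

/-- `u` belongs to the closed ball of radius `M` in `L^∞((0,∞);U)`. -/
def admissible {U : Type*} [NormedAddCommGroup U] (M : ℝ) (u : ℝ → U) : Prop :=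
  AEStronglyMeasurable u (volume.restrict (Set.Ioi 0)) ∧
    ∀ᵐ t ∂volume.restrict (Set.Ioi 0), ‖u t‖ ≤ M

section helpers
variable {X U : Type*} [NormedAddCommGroup X] [InnerProductSpace ℝ X] [CompleteSpace X]
    [NormedAddCommGroup U] [InnerProductSpace ℝ U] [CompleteSpace U]

lemma aux_bound (T : ℝ → X →L[ℝ] X) (hTcont : ∀ x : X, Continuous fun t => T t x) (a : ℝ) :
    ∃ C : ℝ, 0 ≤ C ∧ ∀ t ∈ Set.Icc (-a) a, ‖T t‖ ≤ C := by
  obtain ⟨C, hC⟩ := banach_steinhaus (g := fun t : Set.Icc (-a) a => T t) (by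
    intro x
    obtain ⟨C, hC⟩ := (isCompact_Icc (a := -a) (b := a)).exists_bound_of_continuousOn
      (hTcont x).continuousOn
    exact ⟨C, fun t => hC t t.2⟩)
  exact ⟨max C 0, le_max_right _ _, fun t ht => (hC ⟨t, ht⟩).trans (le_max_left _ _)⟩

lemma aux_joint (T : ℝ → X →L[ℝ] X) (hTcont : ∀ x : X, Continuous fun t => T t x) :
    Continuous fun p : ℝ × X => T p.1 p.2 := by
  rw [continuous_iff_continuousAt]
  rintro ⟨s, x⟩
  obtain ⟨C, hC0, hC⟩ := aux_bound T hTcont (|s| + 1)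
  have h1 : Tendsto (fun p : ℝ × X => C * ‖p.2 - x‖ + ‖T p.1 x - T s x‖) (nhds (s, x))
      (nhds 0) := by
    have : Continuous (fun p : ℝ × X => C * ‖p.2 - x‖ + ‖T p.1 x - T s x‖) := by
      have := (hTcont x).comp (continuous_fst (X := ℝ) (Y := X))
      simp only [Function.comp_def] at this
      fun_prop
    simpa using this.tendsto (s, x)
  unfold ContinuousAt
  rw [tendsto_iff_norm_sub_tendsto_zero]
  refine squeeze_zero' (Eventually.of_forall fun _ => norm_nonneg _) ?_ h1
  have h2 : ∀ᶠ p : ℝ × X in nhds (s, x), p.1 ∈ Set.Icc (-(|s| + 1)) (|s| + 1) := by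
    apply (continuous_fst (X := ℝ) (Y := X)).continuousAt.eventually_mem
    apply Icc_mem_nhds
    · simp only; linarith [neg_abs_le s]
    · simp only; linarith [le_abs_self s]
  filter_upwards [h2] with p hp
  calc ‖T p.1 p.2 - T s x‖ = ‖T p.1 (p.2 - x) + (T p.1 x - T s x)‖ := by
        congr 1; rw [map_sub]; abel
    _ ≤ ‖T p.1 (p.2 - x)‖ + ‖T p.1 x - T s x‖ := norm_add_le _ _
    _ ≤ _ := by
      gcongr
      exact (T p.1).le_of_opNorm_le (hC _ hp) _

lemma aux_meas (T : ℝ → X →L[ℝ] X) (B : U →L[ℝ] X)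
    (hTcont : ∀ x : X, Continuous fun t => T t x) {M : ℝ} {u : ℝ → U} (hu : admissible M u)
    (t : ℝ) :
    AEStronglyMeasurable (fun σ => T (t - σ) (B (u σ))) (volume.restrict (Set.Ioi 0)) := by
  have h1 : AEStronglyMeasurable (fun σ : ℝ => (t - σ, B (u σ))) (volume.restrict (Set.Ioi 0)) :=
    (Continuous.aestronglyMeasurable (by fun_prop)).prodMk
      (B.continuous.comp_aestronglyMeasurable hu.1)
  exact (aux_joint T hTcont).comp_aestronglyMeasurable h1

lemma aux_integ (T : ℝ → X →L[ℝ] X) (B : U →L[ℝ] X)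
    (hTcont : ∀ x : X, Continuous fun t => T t x) {M : ℝ} {u : ℝ → U} (hu : admissible M u)
    (t : ℝ) :
    Integrable (fun σ => T (t - σ) (B (u σ))) (volume.restrict (Set.Ioc 0 t)) := by
  obtain ⟨C, hC0, hC⟩ := aux_bound T hTcont t
  have hle : volume.restrict (Set.Ioc 0 t) ≤ volume.restrict (Set.Ioi (0 : ℝ)) :=
    Measure.restrict_mono Set.Ioc_subset_Ioi_self le_rfl
  refine Integrable.of_bound ((aux_meas T B hTcont hu t).mono_measure hle) (C * (‖B‖ * M)) ?_
  filter_upwards [ae_mono hle hu.2, ae_restrict_mem measurableSet_Ioc] with σ h1 h2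
  refine (T _).le_of_opNorm_le_of_le (hC _ ⟨?_, ?_⟩) (B.le_opNorm_of_le h1)
  · linarith [h2.1, h2.2]
  · linarith [h2.1]

lemma aux_cont (T : ℝ → X →L[ℝ] X) (B : U →L[ℝ] X)
    (hTcont : ∀ x : X, Continuous fun t => T t x) {M : ℝ} {u : ℝ → U}
    (hu : admissible M u) (ψ : X) (τ : ℝ) (hτ : 0 < τ) :
    Tendsto (traj T B ψ u) (nhdsWithin τ (Set.Iio τ)) (nhds (traj T B ψ u τ)) := by
  obtain ⟨C, hC0, hC⟩ := aux_bound T hTcont τ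
  have hle : volume.restrict (Set.Ioc 0 τ) ≤ volume.restrict (Set.Ioi (0 : ℝ)) :=
    Measure.restrict_mono Set.Ioc_subset_Ioi_self le_rfl
  unfold traj
  refine Tendsto.add ((hTcont ψ).continuousAt.mono_left nhdsWithin_le_nhds) ?_
  have hmem : ∀ᶠ t in nhdsWithin τ (Set.Iio τ), t ∈ Set.Ioo 0 τ := Ioo_mem_nhdsLT hτ
  have key : Tendsto (fun t => ∫ σ in Set.Ioc 0 τ,
      (Set.Iic t).indicator (fun σ => T (t - σ) (B (u σ))) σ)
      (nhdsWithin τ (Set.Iio τ)) (nhds (∫ σ in Set.Ioc 0 τ, T (τ - σ) (B (u σ)))) := by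
    refine tendsto_integral_filter_of_dominated_convergence (fun _ => C * (‖B‖ * M)) ?_ ?_ ?_ ?_
    · exact Eventually.of_forall fun t =>
        ((aux_meas T B hTcont hu t).mono_measure hle).indicator measurableSet_Iic
    · filter_upwards [hmem] with t ht
      filter_upwards [ae_mono hle hu.2, ae_restrict_mem measurableSet_Ioc] with σ h1 h2
      have hM : 0 ≤ M := (norm_nonneg _).trans h1
      by_cases hσ : σ ∈ Set.Iic t
      · rw [Set.indicator_of_mem hσ]
        have hσ' : σ ≤ t := hσ
        refine (T _).le_of_opNorm_le_of_le (hC _ ⟨?_, ?_⟩) (B.le_opNorm_of_le h1)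
        · linarith
        · linarith [h2.1, ht.2]
      · rw [Set.indicator_of_notMem hσ]
        simp only [norm_zero]; positivity
    · exact integrable_const _
    · have hne : ∀ᵐ σ ∂volume.restrict (Set.Ioc 0 τ), σ ≠ τ :=
        ae_restrict_of_ae (by simp [ae_iff, measure_singleton])
      filter_upwards [hne, ae_restrict_mem measurableSet_Ioc] with σ h1 h2
      have hlt : σ < τ := lt_of_le_of_ne h2.2 h1
      have h3 : Tendsto (fun t => T (t - σ) (B (u σ))) (nhdsWithin τ (Set.Iio τ))
          (nhds (T (τ - σ) (B (u σ)))) := by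
        have : Continuous fun t => T (t - σ) (B (u σ)) :=
          (hTcont (B (u σ))).comp (continuous_id.sub continuous_const)
        exact this.continuousAt.mono_left nhdsWithin_le_nhds
      refine h3.congr' ?_
      have : ∀ᶠ t in nhdsWithin τ (Set.Iio τ), σ < t :=
        nhdsWithin_le_nhds (Ioi_mem_nhds hlt)
      filter_upwards [this] with t ht
      rw [Set.indicator_of_mem (show σ ∈ Set.Iic t from ht.le)]
  refine key.congr' ?_
  filter_upwards [hmem] with t ht
  rw [integral_indicator measurableSet_Iic, Measure.restrict_restrict measurableSet_Iic]
  congr 2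
  ext σ
  simp only [Set.mem_inter_iff, Set.mem_Iic, Set.mem_Ioc]
  constructor
  · rintro ⟨a, b, c⟩; exact ⟨b, a⟩
  · rintro ⟨a, b⟩; exact ⟨b, a, b.trans ht.2.le⟩

/-- At the optimal time no reachable state lies in the open ball. -/
lemma aux_ge (T : ℝ → X →L[ℝ] X) (B : U →L[ℝ] X)
    (hTcont : ∀ x : X, Continuous fun t => T t x) {r M : ℝ} (ψ : X) (τ : ℝ) (hτ : 0 < τ)
    (hopt : ∀ t : ℝ, 0 ≤ t → ∀ u : ℝ → U, admissible M u →
        traj T B ψ u t ∈ Metric.closedBall (0 : X) r → τ ≤ t)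
    {u : ℝ → U} (hu : admissible M u) : r ≤ ‖traj T B ψ u τ‖ := by
  by_contra hlt
  push Not at hlt
  have h1 := (aux_cont T B hTcont hu ψ τ hτ).norm.eventually_lt_const hlt
  have hmem : ∀ᶠ t in nhdsWithin τ (Set.Iio τ), t ∈ Set.Ioo 0 τ := Ioo_mem_nhdsLT hτ
  obtain ⟨t, ht1, ht2⟩ := (h1.and hmem).exists
  have := hopt t ht2.1.le u hu (by simpa using ht1.le)
  linarith [ht2.2]

lemma aux_adm_comb {M θ : ℝ} (h0 : 0 ≤ θ) (h1 : θ ≤ 1) {u v : ℝ → U} (hu : admissible M u)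
    (hv : admissible M v) : admissible M (fun σ => u σ + θ • (v σ - u σ)) := by
  refine ⟨hu.1.add ((hv.1.sub hu.1).const_smul θ), ?_⟩
  filter_upwards [hu.2, hv.2] with σ a b
  have : u σ + θ • (v σ - u σ) = (1 - θ) • u σ + θ • v σ := by module
  rw [this]
  refine (norm_add_le _ _).trans ?_
  rw [norm_smul, norm_smul, Real.norm_of_nonneg h0, Real.norm_of_nonneg (by linarith : 0 ≤ 1 - θ)]
  nlinarith

lemma aux_traj_comb (T : ℝ → X →L[ℝ] X) (B : U →L[ℝ] X)
    (hTcont : ∀ x : X, Continuous fun t => T t x) {M θ : ℝ} (ψ : X) (τ : ℝ) {u v : ℝ → U}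
    (hu : admissible M u) (hv : admissible M v) :
    traj T B ψ (fun σ => u σ + θ • (v σ - u σ)) τ = traj T B ψ u τ +
      θ • ∫ σ in Set.Ioc 0 τ, T (τ - σ) (B (v σ - u σ)) := by
  have hu' := aux_integ T B hTcont hu τ
  have hv' := aux_integ T B hTcont hv τ
  unfold traj
  simp only [map_add, map_smul, map_sub]
  have hd : Integrable (fun σ => θ • (T (τ - σ) (B (v σ)) - T (τ - σ) (B (u σ))))
      (volume.restrict (Set.Ioc 0 τ)) := (hv'.sub hu').smul θ
  rw [integral_add hu' hd, integral_smul]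
  abel

lemma aux_inner (z d : X) (h : ∀ θ : ℝ, 0 ≤ θ → θ ≤ 1 → ‖z‖ ≤ ‖z + θ • d‖) :
    0 ≤ inner ℝ z d := by
  by_contra hneg
  push Not at hneg
  set a := inner ℝ z d with ha
  have hb : 0 ≤ ‖d‖ ^ 2 := by positivity
  set b := ‖d‖ ^ 2 with hbd
  have hden : 0 < b + 1 - a := by linarith
  set θ := -a / (b + 1 - a) with hθ
  have h0 : 0 < θ := div_pos (by linarith) hden
  have h1 : θ ≤ 1 := by rw [hθ, div_le_one hden]; linarith
  have h2 : θ * b ≤ -a := by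
    rw [hθ, div_mul_eq_mul_div, div_le_iff₀ hden]; nlinarith
  have h3 := h θ h0.le h1
  have h4 : ‖z‖ ^ 2 ≤ ‖z + θ • d‖ ^ 2 := by gcongr
  rw [norm_add_sq_real, inner_smul_right, norm_smul, Real.norm_of_nonneg h0.le, mul_pow,
    ← ha, ← hbd] at h4
  have h5 : 0 ≤ θ * (2 * a + θ * b) := by nlinarith
  have h6 := nonneg_of_mul_nonneg_right h5 h0
  linarith

lemma aux_variational (T : ℝ → X →L[ℝ] X) (B : U →L[ℝ] X)
    (hTcont : ∀ x : X, Continuous fun t => T t x) {r M : ℝ} (ψ : X) (τ : ℝ) (hτ : 0 < τ)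
    (hopt : ∀ t : ℝ, 0 ≤ t → ∀ u : ℝ → U, admissible M u →
        traj T B ψ u t ∈ Metric.closedBall (0 : X) r → τ ≤ t)
    {u : ℝ → U} (hu : admissible M u) (hur : traj T B ψ u τ ∈ Metric.closedBall (0 : X) r)
    {v : ℝ → U} (hv : admissible M v) :
    0 ≤ inner ℝ (traj T B ψ u τ) (∫ σ in Set.Ioc 0 τ, T (τ - σ) (B (v σ - u σ))) := by
  apply aux_inner
  intro θ h0 h1
  rw [← aux_traj_comb T B hTcont ψ τ hu hv]
  refine le_trans (by simpa using hur) (aux_ge T B hTcont ψ τ hτ hopt (aux_adm_comb h0 h1 hu hv))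

lemma aux_pointwise (T : ℝ → X →L[ℝ] X) (B : U →L[ℝ] X)
    (hTcont : ∀ x : X, Continuous fun t => T t x) {r M : ℝ} (ψ : X) (τ : ℝ) (hτ : 0 < τ)
    (hopt : ∀ t : ℝ, 0 ≤ t → ∀ u : ℝ → U, admissible M u →
        traj T B ψ u t ∈ Metric.closedBall (0 : X) r → τ ≤ t)
    {u : ℝ → U} (hu : admissible M u) (hur : traj T B ψ u τ ∈ Metric.closedBall (0 : X) r)
    {v : U} (hv : ‖v‖ ≤ M) :
    ∀ᵐ σ ∂volume.restrict (Set.Ioc 0 τ),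
      0 ≤ inner ℝ (traj T B ψ u τ) (T (τ - σ) (B (v - u σ))) := by
  have hvadm : admissible M (fun _ : ℝ => v) :=
    ⟨aestronglyMeasurable_const, Eventually.of_forall fun _ => hv⟩
  have hint : Integrable (fun σ => T (τ - σ) (B (v - u σ))) (volume.restrict (Set.Ioc 0 τ)) := by
    have := (aux_integ T B hTcont hvadm τ).sub (aux_integ T B hTcont hu τ)
    refine this.congr (Eventually.of_forall fun σ => ?_)
    simp [map_sub]
  refine ae_nonneg_of_forall_setIntegral_nonneg (hint.const_inner _) ?_
  intro E hE _
  rw [integral_inner hint.integrableOn]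
  classical
  have hw : admissible M (E.piecewise (fun _ => v) u) := by
    refine ⟨AEStronglyMeasurable.piecewise hE aestronglyMeasurable_const hu.1.restrict, ?_⟩
    filter_upwards [hu.2] with σ hσ
    by_cases h : σ ∈ E
    · simpa [h] using hv
    · simpa [h] using hσ
  have := aux_variational T B hTcont ψ τ hτ hopt hu hur hw
  rw [← integral_indicator hE]
  convert this using 4 with σ
  by_cases h : σ ∈ E <;> simp [h]

lemma aux_bang (T : ℝ → X →L[ℝ] X) (B : U →L[ℝ] X)
    (hTcont : ∀ x : X, Continuous fun t => T t x)
    (hUC : ∀ η : X, ∀ s : Set ℝ, MeasurableSet s → 0 < volume s →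
      (∀ t ∈ s, B.adjoint ((T t).adjoint η) = 0) → η = 0)
    {r M : ℝ} (hr : 0 < r) (hM : 0 < M) (ψ : X) (τ : ℝ) (hτ : 0 < τ)
    (hopt : ∀ t : ℝ, 0 ≤ t → ∀ u : ℝ → U, admissible M u →
        traj T B ψ u t ∈ Metric.closedBall (0 : X) r → τ ≤ t)
    {u : ℝ → U} (hu : admissible M u) (hur : traj T B ψ u τ ∈ Metric.closedBall (0 : X) r) :
    ∀ᵐ t ∂volume.restrict (Set.Ioo 0 τ), ‖u t‖ = M := by
  set η := traj T B ψ u τ with hη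
  have hη0 : η ≠ 0 := by
    have := aux_ge T B hTcont ψ τ hτ hopt hu
    rw [← norm_pos_iff]; linarith
  set φ : ℝ → U := fun t => B.adjoint ((T t).adjoint η) with hφ
  have hφi : ∀ t w, inner ℝ (φ t) w = inner ℝ η (T t (B w)) := by
    intro t w
    simp only [hφ, ContinuousLinearMap.adjoint_inner_left]
  have hφc : ∀ w, Continuous fun t => inner ℝ (φ t) w := by
    intro w
    simp only [hφi]
    exact continuous_const.inner (hTcont (B w))
  -- nonvanishing
  have hZ : IsClosed {t | φ t = 0} := by
    have : {t | φ t = 0} = ⋂ w : U, {t | inner ℝ (φ t) w = 0} := by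
      ext t
      simp only [Set.mem_ofPred_eq, Set.mem_iInter]
      constructor
      · intro h w; simp [h]
      · intro h; exact inner_self_eq_zero.1 (h (φ t))
    rw [this]
    exact isClosed_iInter fun w => isClosed_eq (hφc w) continuous_const
  have hZ0 : volume {t | φ t = 0} = 0 := by
    by_contra hne
    exact hη0 (hUC η _ hZ.measurableSet (pos_iff_ne_zero.2 hne) fun t ht => ht)
  have hZ' : ∀ᵐ σ : ℝ, φ (τ - σ) ≠ 0 := by
    have h1 : ∀ᵐ t : ℝ, φ t ≠ 0 := by simpa [ae_iff] using hZ0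
    exact (Measure.measurePreserving_sub_left volume τ).quasiMeasurePreserving.ae h1
  -- separable range
  set S : Submodule ℝ U := (Submodule.span ℝ (Set.range fun q : ℚ => φ q)).topologicalClosure
    with hS
  have hφS : ∀ t, φ t ∈ S := by
    intro t
    rw [hS, ← Submodule.orthogonal_orthogonal_eq_closure, Submodule.mem_orthogonal']
    intro w hw
    have hz : (fun t => inner ℝ (φ t) w) = fun _ => 0 := by
      refine (Rat.denseRange_cast (𝕜 := ℝ)).equalizer (hφc w) continuous_const ?_
      ext q
      exact (Submodule.mem_orthogonal _ _).1 hw _ (Submodule.subset_span ⟨q, rfl⟩)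
    exact congrFun hz t
  have hSsep : TopologicalSpace.IsSeparable (S : Set U) := by
    rw [hS, Submodule.topologicalClosure_coe]
    exact ((Set.countable_range _).isSeparable.span).closure
  have hDsep : TopologicalSpace.IsSeparable ((S : Set U) ∩ Metric.closedBall 0 M) :=
    hSsep.mono Set.inter_subset_left
  obtain ⟨D, hDsub, hDc, hDd⟩ := hDsep.exists_countable_dense_subset
  have hall : ∀ᵐ σ ∂volume.restrict (Set.Ioc 0 τ), ∀ v ∈ D,
      0 ≤ inner ℝ (φ (τ - σ)) (v - u σ) := by
    rw [ae_ball_iff hDc]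
    intro v hv
    simp only [hφi]
    exact aux_pointwise T B hTcont ψ τ hτ hopt hu hur (by simpa using (hDsub hv).2)
  have hle : volume.restrict (Set.Ioo 0 τ) ≤ volume.restrict (Set.Ioc (0 : ℝ) τ) :=
    Measure.restrict_mono Set.Ioo_subset_Ioc_self le_rfl
  have hle' : volume.restrict (Set.Ioo 0 τ) ≤ volume.restrict (Set.Ioi (0 : ℝ)) :=
    Measure.restrict_mono (fun x hx => hx.1) le_rfl
  filter_upwards [ae_mono hle hall, ae_mono hle' hu.2, ae_restrict_of_ae hZ'] with σ h1 h2 h3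
  refine le_antisymm h2 ?_
  set p := φ (τ - σ) with hp
  have hpn : 0 < ‖p‖ := norm_pos_iff.2 h3
  have hcl : IsClosed {v : U | 0 ≤ inner ℝ p (v - u σ)} :=
    isClosed_le continuous_const (by fun_prop)
  have hv : (-(M / ‖p‖)) • p ∈ closure D := by
    apply hDd
    refine ⟨S.smul_mem _ (hφS _), ?_⟩
    rw [mem_closedBall_zero_iff, norm_smul, norm_neg, Real.norm_of_nonneg (by positivity),
      div_mul_cancel₀ _ hpn.ne']
  have h4 : 0 ≤ inner ℝ p ((-(M / ‖p‖)) • p - u σ) := closure_minimal h1 hcl hv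
  rw [inner_sub_right, inner_smul_right, real_inner_self_eq_norm_sq] at h4
  have h5 : -(M / ‖p‖) * ‖p‖ ^ 2 = -(M * ‖p‖) := by field_simp
  have h6 := abs_le.1 (abs_real_inner_le_norm p (u σ))
  rw [h5] at h4
  have h7 : M * ‖p‖ ≤ ‖u σ‖ * ‖p‖ := by linarith [h6.1, mul_comm ‖p‖ ‖u σ‖]
  exact le_of_mul_le_mul_right h7 hpn

end helpers

/-- (Bang-bang property.) Assume the unique continuation property: if
`B* T*_t η = 0` for all `t` in a set of positive measure, then `η = 0`. Then any time optimal
control `u*` of `(TP)^M` satisfies `‖u*(t)‖ = M` for a.e. `t ∈ (0,τ*(M))`, and the time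
optimal control is unique. -/
theorem stmt7 {X U : Type*} [NormedAddCommGroup X] [InnerProductSpace ℝ X] [CompleteSpace X]
    [NormedAddCommGroup U] [InnerProductSpace ℝ U] [CompleteSpace U]
    (T : ℝ → X →L[ℝ] X) (B : U →L[ℝ] X)
    (hT0 : T 0 = 1)
    (hTadd : ∀ s t : ℝ, 0 ≤ s → 0 ≤ t → T (s + t) = (T s).comp (T t))
    (hTcont : ∀ x : X, Continuous fun t => T t x)
    -- unique continuation
    (hUC : ∀ η : X, ∀ s : Set ℝ, MeasurableSet s → 0 < volume s →
      (∀ t ∈ s, B.adjoint ((T t).adjoint η) = 0) → η = 0)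
    (r M : ℝ) (hr : 0 < r) (hM : 0 < M)
    (ψ : X) (hψ : ψ ∉ Metric.closedBall (0 : X) r)
    (τs : ℝ) (hτs : 0 ≤ τs) :
    -- bang-bang property of any time optimal control
    (∀ us : ℝ → U, admissible M us →
      traj T B ψ us τs ∈ Metric.closedBall (0 : X) r →
      (∀ t : ℝ, 0 ≤ t → ∀ u : ℝ → U, admissible M u →
        traj T B ψ u t ∈ Metric.closedBall (0 : X) r → τs ≤ t) →
      ∀ᵐ t ∂volume.restrict (Set.Ioo 0 τs), ‖us t‖ = M) ∧
    -- uniqueness of the time optimal control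
    (∀ u₁ u₂ : ℝ → U, admissible M u₁ → admissible M u₂ →
      traj T B ψ u₁ τs ∈ Metric.closedBall (0 : X) r →
      traj T B ψ u₂ τs ∈ Metric.closedBall (0 : X) r →
      (∀ t : ℝ, 0 ≤ t → ∀ u : ℝ → U, admissible M u →
        traj T B ψ u t ∈ Metric.closedBall (0 : X) r → τs ≤ t) →
      ∀ᵐ t ∂volume.restrict (Set.Ioo 0 τs), u₁ t = u₂ t) := by
  rcases hτs.eq_or_lt with h0 | hτ
  · subst h0
    simp
  refine ⟨fun us hus husr hopt => aux_bang T B hTcont hUC hr hM ψ τs hτ hopt hus husr, ?_⟩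
  intro u₁ u₂ h₁ h₂ hr₁ hr₂ hopt
  have hm := aux_adm_comb (θ := 1 / 2) (by norm_num) (by norm_num) h₁ h₂
  have hmr : traj T B ψ (fun σ => u₁ σ + (1 / 2 : ℝ) • (u₂ σ - u₁ σ)) τs
      ∈ Metric.closedBall (0 : X) r := by
    rw [aux_traj_comb T B hTcont ψ τs h₁ h₂]
    have e := aux_traj_comb T B hTcont (θ := 1) ψ τs h₁ h₂
    simp only [one_smul, add_sub_cancel] at e
    have e2 := sub_eq_iff_eq_add'.2 e
    rw [← e2]
    have := (convex_closedBall (0 : X) r).add_smul_sub_mem hr₁ hr₂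
      (t := 1 / 2) ⟨by norm_num, by norm_num⟩
    exact this
  filter_upwards [aux_bang T B hTcont hUC hr hM ψ τs hτ hopt h₁ hr₁,
    aux_bang T B hTcont hUC hr hM ψ τs hτ hopt h₂ hr₂,
    aux_bang T B hTcont hUC hr hM ψ τs hτ hopt hm hmr] with σ e1 e2 e3
  have e4 : u₁ σ + (1 / 2 : ℝ) • (u₂ σ - u₁ σ) = (1 / 2 : ℝ) • (u₁ σ + u₂ σ) := by module
  rw [e4, norm_smul, Real.norm_of_nonneg (by norm_num)] at e3
  have e5 := parallelogram_law_with_norm ℝ (u₁ σ) (u₂ σ)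
  have e6 : ‖u₁ σ + u₂ σ‖ = 2 * M := by linarith
  rw [e6, e1, e2] at e5
  have e7 : ‖u₁ σ - u₂ σ‖ = 0 := by nlinarith
  exact sub_eq_zero.1 (norm_eq_zero.1 e7)
end

section
/- (Representation of the time optimal control.) Under the observability and unique continuation assumptions, let M > 0, let τ*(M) be the optimal time for (TP)^M, and let η̂ be the minimizer of J^{τ*(M)}. Then the unique time optimal control is u*(t) = M · B*T*_{τ*(M)-t}η̂ / ||B*T*_{τ*(M)-t}η̂||_U for a.e. t ∈ (0,τ*(M)), and moreover η̂ ≠ 0. -/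
open MeasureTheory Filter
open scoped RealInnerProductSpace

/-- The functional `J^τ(η) = ½(∫_0^τ ‖B*T*_{τ-t}η‖ dt)² + ⟨ψ, T*_τ η⟩ + r‖η‖`. -/
noncomputable def Jfun {X U : Type*} [NormedAddCommGroup X] [InnerProductSpace ℝ X]
    [CompleteSpace X] [NormedAddCommGroup U] [InnerProductSpace ℝ U] [CompleteSpace U]
    (T : ℝ → X →L[ℝ] X) (B : U →L[ℝ] X) (r : ℝ) (ψ : X) (τ : ℝ) (η : X) : ℝ :=
  (1 / 2) * (∫ t in Set.Ioc 0 τ, ‖B.adjoint ((T (τ - t)).adjoint η)‖) ^ 2 +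
    ⟪ψ, (T τ).adjoint η⟫ + r * ‖η‖

section Helpers

/-- A weakly continuous Hilbert-valued function on `ℝ` is strongly measurable. -/
lemma weakCont_sm {U : Type*} [NormedAddCommGroup U] [InnerProductSpace ℝ U] [CompleteSpace U]
    (f : ℝ → U) (hf : ∀ y : U, Continuous fun t => ⟪f t, y⟫) : StronglyMeasurable f := by
  borelize U
  set S : Submodule ℝ U := (Submodule.span ℝ (Set.range fun q : ℚ => f (q : ℝ))).topologicalClosure
    with hS
  have hSsep : TopologicalSpace.IsSeparable (S : Set U) := by
    rw [hS, Submodule.topologicalClosure_coe]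
    exact ((Set.countable_range _).isSeparable.span (R := ℝ)).closure
  have hSc : IsClosed (S : Set U) := Submodule.isClosed_topologicalClosure _
  have hmem : ∀ t, f t ∈ S := by
    intro t
    have : CompleteSpace S := hSc.completeSpace_coe
    rw [← Submodule.orthogonal_orthogonal S]
    rw [Submodule.mem_orthogonal']
    intro y hy
    have h0 : (fun t => ⟪f t, y⟫) = fun _ => (0 : ℝ) := by
      refine Continuous.ext_on Rat.denseRange_cast (hf y) continuous_const ?_
      rintro _ ⟨q, rfl⟩
      rw [Submodule.mem_orthogonal] at hy
      exact hy _ (Submodule.le_topologicalClosure _ (Submodule.subset_span ⟨q, rfl⟩))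
    exact congrFun h0 t
  have hsep : TopologicalSpace.IsSeparable (Set.range f) :=
    hSsep.mono (by rintro _ ⟨t, rfl⟩; exact hmem t)
  -- closed balls have closed preimages
  have hball : ∀ (x : U) (ρ : ℝ), 0 < ρ → IsClosed (f ⁻¹' Metric.closedBall x ρ) := by
    intro x ρ hρ
    have : f ⁻¹' Metric.closedBall x ρ = ⋂ y : U, {t | ⟪f t, y⟫ - ⟪x, y⟫ ≤ ρ * ‖y‖} := by
      ext t
      simp only [Set.mem_preimage, Metric.mem_closedBall, Set.mem_iInter, Set.mem_ofPred_eq,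
        dist_eq_norm]
      constructor
      · intro h y
        rw [← inner_sub_left]
        exact (real_inner_le_norm _ _).trans (by gcongr)
      · intro h
        have h1 := h (f t - x)
        rw [← inner_sub_left, real_inner_self_eq_norm_sq] at h1
        by_contra h2
        push Not at h2
        nlinarith
    rw [this]
    exact isClosed_iInter fun y => isClosed_le ((hf y).sub continuous_const) continuous_const
  refine stronglyMeasurable_iff_measurable_separable.2 ⟨?_, hsep⟩
  refine measurable_of_isOpen fun O hO => ?_
  obtain ⟨c, hc, hcl⟩ := hsep
  have : f ⁻¹' O = ⋃ d ∈ c, ⋃ q ∈ {q : ℚ | 0 < (q : ℝ) ∧ Metric.closedBall d (q : ℝ) ⊆ O},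
      f ⁻¹' Metric.closedBall d (q : ℝ) := by
    ext t
    simp only [Set.mem_preimage, Set.mem_iUnion, Set.mem_ofPred_eq, exists_prop]
    constructor
    · intro ht
      obtain ⟨ε, hε, hεO⟩ := Metric.isOpen_iff.1 hO _ ht
      obtain ⟨q, hq0, hq⟩ := exists_rat_btwn (show (0 : ℝ) < ε / 2 by linarith)
      obtain ⟨d, hd, hdt⟩ := Metric.mem_closure_iff.1 (hcl ⟨t, rfl⟩) q hq0
      refine ⟨d, hd, q, ⟨hq0, fun y hy => hεO ?_⟩, Metric.mem_closedBall.2 hdt.le⟩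
      rw [Metric.mem_closedBall] at hy
      rw [Metric.mem_ball]
      have := dist_triangle y d (f t)
      rw [dist_comm d] at this
      linarith
    · rintro ⟨d, -, q, ⟨-, hq⟩, h⟩
      exact hq h
  rw [this]
  exact MeasurableSet.biUnion hc fun d _ => MeasurableSet.biUnion (Set.to_countable _)
    fun q hq => (hball d q hq.1).measurableSet

variable {X U : Type*} [NormedAddCommGroup X] [InnerProductSpace ℝ X] [CompleteSpace X]
    [NormedAddCommGroup U] [InnerProductSpace ℝ U] [CompleteSpace U]

lemma F_weak (T : ℝ → X →L[ℝ] X) (B : U →L[ℝ] X) (hTcont : ∀ x : X, Continuous fun t => T t x)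
    (τ : ℝ) (η : X) (y : U) :
    Continuous fun t => ⟪B.adjoint ((T (τ - t)).adjoint η), y⟫ := by
  simp only [ContinuousLinearMap.adjoint_inner_left]
  exact continuous_const.inner ((hTcont (B y)).comp (continuous_const.sub continuous_id))

lemma F_sm (T : ℝ → X →L[ℝ] X) (B : U →L[ℝ] X) (hTcont : ∀ x : X, Continuous fun t => T t x)
    (τ : ℝ) (η : X) :
    StronglyMeasurable fun t => B.adjoint ((T (τ - t)).adjoint η) :=
  weakCont_sm _ (F_weak T B hTcont τ η)

lemma F_bound (T : ℝ → X →L[ℝ] X) (B : U →L[ℝ] X) (hTcontr : ∀ t : ℝ, 0 ≤ t → ‖T t‖ ≤ 1)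
    (t : ℝ) (ht : 0 ≤ t) (η : X) : ‖B.adjoint ((T t).adjoint η)‖ ≤ ‖B‖ * ‖η‖ := by
  refine (ContinuousLinearMap.le_opNorm _ _).trans ?_
  rw [LinearIsometryEquiv.norm_map]
  refine mul_le_mul_of_nonneg_left ?_ (norm_nonneg _)
  refine (ContinuousLinearMap.le_opNorm _ _).trans ?_
  rw [LinearIsometryEquiv.norm_map]
  exact mul_le_of_le_one_left (norm_nonneg _) (hTcontr t ht)

lemma F_int (T : ℝ → X →L[ℝ] X) (B : U →L[ℝ] X) (hTcont : ∀ x : X, Continuous fun t => T t x)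
    (hTcontr : ∀ t : ℝ, 0 ≤ t → ‖T t‖ ≤ 1) (τ : ℝ) (η : X) :
    IntegrableOn (fun t => ‖B.adjoint ((T (τ - t)).adjoint η)‖) (Set.Ioc 0 τ) := by
  refine Measure.integrableOn_of_bounded (M := ‖B‖ * ‖η‖) (by simp)
    (F_sm T B hTcont τ η).norm.aestronglyMeasurable ?_
  filter_upwards [ae_restrict_mem measurableSet_Ioc] with t ht
  rw [norm_norm]
  exact F_bound T B hTcontr _ (by linarith [ht.2]) η

lemma G_refl (T : ℝ → X →L[ℝ] X) (B : U →L[ℝ] X) (τ : ℝ) (hτ : 0 ≤ τ) (η : X) :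
    ∫ t in Set.Ioc 0 τ, ‖B.adjoint ((T (τ - t)).adjoint η)‖ =
      ∫ t in Set.Ioc 0 τ, ‖B.adjoint ((T t).adjoint η)‖ := by
  rw [← intervalIntegral.integral_of_le hτ, ← intervalIntegral.integral_of_le hτ,
    intervalIntegral.integral_comp_sub_left (fun t => ‖B.adjoint ((T t).adjoint η)‖) τ]
  simp

lemma adm_ae {M : ℝ} {u : ℝ → U} (hu : admissible M u) (τ : ℝ) :
    ∀ᵐ t ∂volume.restrict (Set.Ioc 0 τ), ‖u t‖ ≤ M :=
  ae_restrict_of_ae_restrict_of_subset Set.Ioc_subset_Ioi_self hu.2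

lemma adm_sm {M : ℝ} {u : ℝ → U} (hu : admissible M u) (τ : ℝ) :
    AEStronglyMeasurable u (volume.restrict (Set.Ioc 0 τ)) :=
  hu.1.mono_measure (Measure.restrict_mono_set _ Set.Ioc_subset_Ioi_self)

lemma TB_int (T : ℝ → X →L[ℝ] X) (B : U →L[ℝ] X) (hTcont : ∀ x : X, Continuous fun t => T t x)
    (hTcontr : ∀ t : ℝ, 0 ≤ t → ‖T t‖ ≤ 1) (τ M : ℝ) (u : ℝ → U) (hu : admissible M u) :
    IntegrableOn (fun t => T (τ - t) (B (u t))) (Set.Ioc 0 τ) := by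
  have hc : Continuous fun p : ℝ × X => T (max p.1 0) p.2 := by
    rw [continuous_iff_continuousAt]
    rintro ⟨t0, x0⟩
    rw [ContinuousAt, tendsto_iff_norm_sub_tendsto_zero]
    have h1 : Tendsto (fun p : ℝ × X => ‖p.2 - x0‖ + ‖T (max p.1 0) x0 - T (max t0 0) x0‖)
        (nhds (t0, x0)) (nhds 0) := by
      have : Continuous (fun p : ℝ × X => ‖p.2 - x0‖ + ‖T (max p.1 0) x0 - T (max t0 0) x0‖) := by
        have h2 : Continuous fun p : ℝ × X => T (max p.1 0) x0 :=
          (hTcont x0).comp (continuous_fst.max continuous_const)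
        fun_prop
      simpa using this.tendsto (t0, x0)
    refine squeeze_zero (fun _ => norm_nonneg _) (fun p => ?_) h1
    have h3 : T (max p.1 0) p.2 - T (max t0 0) x0 =
        T (max p.1 0) (p.2 - x0) + (T (max p.1 0) x0 - T (max t0 0) x0) := by
      rw [map_sub]; abel
    simp only
    rw [h3]
    refine (norm_add_le _ _).trans (add_le_add_left ?_ _)
    refine (ContinuousLinearMap.le_opNorm _ _).trans ?_
    exact mul_le_of_le_one_left (norm_nonneg _) (hTcontr _ (le_max_right _ _))
  have hm : AEStronglyMeasurable (fun t => T (max (τ - t) 0) (B (u t)))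
      (volume.restrict (Set.Ioc 0 τ)) := by
    have h1 : AEStronglyMeasurable (fun t : ℝ => τ - t) (volume.restrict (Set.Ioc 0 τ)) :=
      (continuous_const.sub continuous_id).aestronglyMeasurable
    exact hc.comp_aestronglyMeasurable
      (h1.prodMk (B.continuous.comp_aestronglyMeasurable (adm_sm hu τ)))
  have heq : (fun t => T (max (τ - t) 0) (B (u t))) =ᵐ[volume.restrict (Set.Ioc 0 τ)]
      fun t => T (τ - t) (B (u t)) := by
    filter_upwards [ae_restrict_mem measurableSet_Ioc] with t ht
    rw [max_eq_left (by linarith [ht.2])]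
  have hi : IntegrableOn (fun t => T (τ - t) (B (u t))) (Set.Ioc 0 τ) := by
    refine ⟨hm.congr heq, .restrict_of_bounded (C := ‖B‖ * M) (by simp) ?_⟩
    filter_upwards [ae_restrict_mem measurableSet_Ioc, adm_ae hu τ] with t ht hut
    refine (ContinuousLinearMap.le_opNorm _ _).trans ?_
    refine (mul_le_of_le_one_left (norm_nonneg _) (hTcontr _ (by linarith [ht.2]))).trans ?_
    exact (ContinuousLinearMap.le_opNorm _ _).trans (by gcongr)
  exact hi

lemma pairing (T : ℝ → X →L[ℝ] X) (B : U →L[ℝ] X) (hTcont : ∀ x : X, Continuous fun t => T t x)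
    (hTcontr : ∀ t : ℝ, 0 ≤ t → ‖T t‖ ≤ 1) (ψ : X) (τ M : ℝ) (u : ℝ → U) (hu : admissible M u)
    (η : X) :
    ⟪η, traj T B ψ u τ⟫ = ⟪η, T τ ψ⟫ +
      ∫ t in Set.Ioc 0 τ, ⟪u t, B.adjoint ((T (τ - t)).adjoint η)⟫ := by
  rw [traj, inner_add_right, ← integral_inner (TB_int T B hTcont hTcontr τ M u hu)]
  simp only [ContinuousLinearMap.adjoint_inner_right]
  congr 2
  ext t
  rw [real_inner_comm]

/-- The bang-bang control. -/
lemma bang_adm (T : ℝ → X →L[ℝ] X) (B : U →L[ℝ] X) (hTcont : ∀ x : X, Continuous fun t => T t x)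
    (τ M c : ℝ) (hc : |c| ≤ M) (η : X) :
    admissible M fun t => c • (‖B.adjoint ((T (τ - t)).adjoint η)‖⁻¹ •
          B.adjoint ((T (τ - t)).adjoint η)) := by
  have h := F_sm T B hTcont τ η
  refine ⟨?_, Eventually.of_forall fun t => ?_⟩
  · have h2 : StronglyMeasurable fun t => ‖B.adjoint ((T (τ - t)).adjoint η)‖⁻¹ :=
      h.norm.measurable.inv.stronglyMeasurable
    exact ((h2.smul h).const_smul c).aestronglyMeasurable
  · simp only
    rw [norm_smul, norm_smul, norm_inv, norm_norm, Real.norm_eq_abs]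
    refine le_trans ?_ hc
    exact mul_le_of_le_one_right (abs_nonneg _) (inv_mul_le_one)

lemma u_int (T : ℝ → X →L[ℝ] X) (B : U →L[ℝ] X) (hTcont : ∀ x : X, Continuous fun t => T t x)
    (hTcontr : ∀ t : ℝ, 0 ≤ t → ‖T t‖ ≤ 1) (τ M : ℝ) (u : ℝ → U) (hu : admissible M u)
    (η : X) :
    IntegrableOn (fun t => ⟪u t, B.adjoint ((T (τ - t)).adjoint η)⟫) (Set.Ioc 0 τ) := by
  refine Integrable.mono' ((F_int T B hTcont hTcontr τ η).const_mul M)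
    ((adm_sm hu τ).inner (F_sm T B hTcont τ η).aestronglyMeasurable) ?_
  filter_upwards [adm_ae hu τ] with t ht
  exact (norm_inner_le_norm _ _).trans (by gcongr)

lemma u_le (T : ℝ → X →L[ℝ] X) (B : U →L[ℝ] X) (hTcont : ∀ x : X, Continuous fun t => T t x)
    (hTcontr : ∀ t : ℝ, 0 ≤ t → ‖T t‖ ≤ 1) (τ M : ℝ) (u : ℝ → U) (hu : admissible M u)
    (η : X) :
    ∫ t in Set.Ioc 0 τ, ⟪u t, B.adjoint ((T (τ - t)).adjoint η)⟫ ≤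
      M * ∫ t in Set.Ioc 0 τ, ‖B.adjoint ((T (τ - t)).adjoint η)‖ := by
  rw [← integral_const_mul]
  refine integral_mono_ae (u_int T B hTcont hTcontr τ M u hu η)
    ((F_int T B hTcont hTcontr τ η).const_mul M) ?_
  filter_upwards [adm_ae hu τ] with t ht
  exact (real_inner_le_norm _ _).trans (by gcongr)

lemma adm_conv {M : ℝ} {u v : ℝ → U} (hu : admissible M u) (hv : admissible M v) {a b : ℝ}
    (ha : 0 ≤ a) (hb : 0 ≤ b) (hab : a + b = 1) : admissible M fun t => a • u t + b • v t := by
  refine ⟨(hu.1.const_smul a).add (hv.1.const_smul b), ?_⟩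
  filter_upwards [hu.2, hv.2] with t h1 h2
  refine (norm_add_le _ _).trans ?_
  rw [norm_smul, norm_smul, Real.norm_of_nonneg ha, Real.norm_of_nonneg hb]
  calc a * ‖u t‖ + b * ‖v t‖ ≤ a * M + b * M := by gcongr
    _ = M := by rw [← add_mul, hab, one_mul]

/-- Separation: if the ball is not reachable at time `t`, there is a nonzero dual witness. -/
lemma separation (T : ℝ → X →L[ℝ] X) (B : U →L[ℝ] X)
    (hTcont : ∀ x : X, Continuous fun t => T t x)
    (hTcontr : ∀ t : ℝ, 0 ≤ t → ‖T t‖ ≤ 1) (ψ : X) (t M r : ℝ) (hM : 0 < M) (hr : 0 < r)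
    (hno : ∀ u : ℝ → U, admissible M u → traj T B ψ u t ∉ Metric.closedBall (0 : X) r) :
    ∃ η : X, η ≠ 0 ∧ r * ‖η‖ + M * ∫ s in Set.Ioc 0 t, ‖B.adjoint ((T (t - s)).adjoint η)‖ ≤
      ⟪η, T t ψ⟫ := by
  have hconv : Convex ℝ {z : X | ∃ u : ℝ → U, admissible M u ∧ traj T B ψ u t = z} := by
    rintro _ ⟨u, hu, rfl⟩ _ ⟨v, hv, rfl⟩ a b ha hb hab
    refine ⟨_, adm_conv hu hv ha hb hab, ?_⟩
    simp only [traj, map_add, map_smul]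
    have hi1 : IntegrableOn (fun σ => a • T (t - σ) (B (u σ))) (Set.Ioc 0 t) :=
      (TB_int T B hTcont hTcontr t M u hu).smul a
    have hi2 : IntegrableOn (fun σ => b • T (t - σ) (B (v σ))) (Set.Ioc 0 t) :=
      (TB_int T B hTcont hTcontr t M v hv).smul b
    rw [integral_add hi1 hi2, integral_smul, integral_smul]
    have : T t ψ = a • T t ψ + b • T t ψ := by rw [← add_smul, hab, one_smul]
    rw [smul_add, smul_add]
    nth_rewrite 1 [this]
    abel
  obtain ⟨f, c, hf1, hf2⟩ := geometric_hahn_banach_open (convex_ball (0 : X) r) Metric.isOpen_ball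
    hconv (by
      rw [Set.disjoint_left]
      rintro _ hz ⟨u, hu, rfl⟩
      exact hno u hu (Metric.ball_subset_closedBall hz))
  set η : X := (InnerProductSpace.toDual ℝ X).symm f with hη
  have hfη : ∀ x, f x = ⟪η, x⟫ := fun x => by
    rw [hη, InnerProductSpace.toDual_symm_apply]
  have hc0 : 0 < c := by simpa using hf1 0 (by simpa using hr)
  have hbang := bang_adm T B hTcont t M (-M) (by rw [abs_neg, abs_of_pos hM]) η
  have h1 := hf2 _ ⟨_, hbang, rfl⟩
  rw [hfη, pairing T B hTcont hTcontr ψ t M _ hbang η] at h1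
  have h2 : ∀ s, ⟪-M • (‖B.adjoint ((T (t - s)).adjoint η)‖⁻¹ •
          B.adjoint ((T (t - s)).adjoint η)), B.adjoint ((T (t - s)).adjoint η)⟫ =
      -M * ‖B.adjoint ((T (t - s)).adjoint η)‖ := by
    intro s
    rw [real_inner_smul_left, real_inner_smul_left, real_inner_self_eq_norm_sq]
    by_cases h : ‖B.adjoint ((T (t - s)).adjoint η)‖ = 0
    · simp [h]
    · field_simp
  simp only [h2] at h1
  rw [integral_const_mul] at h1
  have hη0 : η ≠ 0 := by
    intro h0
    rw [h0] at h1
    simp at h1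
    linarith
  have hηp : 0 < ‖η‖ := norm_pos_iff.2 hη0
  refine ⟨η, hη0, ?_⟩
  have h3 : r * ‖η‖ ≤ c := by
    by_contra h4
    push Not at h4
    -- the vector `(c / ‖η‖²) η` lies in the open ball
    have h5 := hf1 ((c / ‖η‖ ^ 2) • η) (by
      rw [mem_ball_zero_iff, norm_smul, Real.norm_of_nonneg (by positivity)]
      rw [div_mul_eq_mul_div, div_lt_iff₀ (by positivity)]
      nlinarith)
    rw [hfη, real_inner_smul_right, real_inner_self_eq_norm_sq,
      div_mul_cancel₀ _ (by positivity)] at h5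
    exact lt_irrefl _ h5
  linarith

/-- If the dual condition holds at `τ` with `m < M`, the ball is reachable before `τ`. -/
lemma earlier (T : ℝ → X →L[ℝ] X) (B : U →L[ℝ] X)
    (hTcont : ∀ x : X, Continuous fun t => T t x)
    (hTcontr : ∀ t : ℝ, 0 ≤ t → ‖T t‖ ≤ 1)
    (K : ℝ → ℝ) (hK_pos : ∀ τ : ℝ, 0 < τ → 0 < K τ) (hK_cont : ContinuousOn K (Set.Ioi 0))
    (hobs : ∀ τ : ℝ, 0 < τ → ∀ η : X,
      ‖(T τ).adjoint η‖ ≤ K τ * ∫ t in Set.Ioc 0 τ, ‖B.adjoint ((T t).adjoint η)‖)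
    (ψ : X) (τ m M r : ℝ) (hτ : 0 < τ) (hm : 0 ≤ m) (hmM : m < M) (hr : 0 < r)
    (hdual : ∀ η : X, ⟪η, T τ ψ⟫ ≤
      m * (∫ s in Set.Ioc 0 τ, ‖B.adjoint ((T (τ - s)).adjoint η)‖) + r * ‖η‖) :
    ∃ t, 0 < t ∧ t < τ ∧ ∃ u : ℝ → U, admissible M u ∧
      traj T B ψ u t ∈ Metric.closedBall (0 : X) r := by
  have hKτ := hK_pos τ hτ
  have e1 : ∀ᶠ t in nhdsWithin τ (Set.Iio τ), 0 < t :=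
    (lt_mem_nhds hτ).filter_mono nhdsWithin_le_nhds
  have e2 : ∀ᶠ t in nhdsWithin τ (Set.Iio τ), t < τ := self_mem_nhdsWithin
  have e3 : ∀ᶠ t in nhdsWithin τ (Set.Iio τ), K t < K τ + 1 :=
    ((hK_cont.continuousAt (Ioi_mem_nhds hτ)).eventually_lt_const (by linarith)).filter_mono
      nhdsWithin_le_nhds
  have e4 : ∀ᶠ t in nhdsWithin τ (Set.Iio τ),
      (‖T t ψ - T τ ψ‖ + m * ((τ - t) * ‖B‖)) * (‖ψ‖ * (K τ + 1)) < (M - m) * r := by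
    have hc : Continuous fun t => (‖T t ψ - T τ ψ‖ + m * ((τ - t) * ‖B‖)) * (‖ψ‖ * (K τ + 1)) := by
      have := hTcont ψ
      fun_prop
    refine (hc.continuousAt.eventually_lt_const ?_).filter_mono nhdsWithin_le_nhds
    simp only [sub_self, norm_zero, zero_mul, mul_zero, add_zero]
    exact mul_pos (by linarith) hr
  obtain ⟨t, ht0, htτ, hKt, hε⟩ := (e1.and (e2.and (e3.and e4))).exists
  refine ⟨t, ht0, htτ, ?_⟩
  by_contra hno
  push Not at hno
  obtain ⟨η, hη0, hsep⟩ := separation T B hTcont hTcontr ψ t M r (by linarith) hr hno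
  have hηp : 0 < ‖η‖ := norm_pos_iff.2 hη0
  have hdη := hdual η
  have hobt := hobs t ht0 η
  have hI : ∀ a b, 0 ≤ a → a ≤ b →
      IntervalIntegrable (fun s => ‖B.adjoint ((T s).adjoint η)‖) volume a b := by
    intro a b ha hab
    rw [intervalIntegrable_iff_integrableOn_Ioc_of_le hab]
    refine Measure.integrableOn_of_bounded (M := ‖B‖ * ‖η‖) (by simp) ?_ ?_
    · have h := weakCont_sm (fun s => B.adjoint ((T s).adjoint η)) (fun y => by
        simp only [ContinuousLinearMap.adjoint_inner_left]
        exact continuous_const.inner (hTcont (B y)))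
      exact h.norm.aestronglyMeasurable
    · filter_upwards [ae_restrict_mem measurableSet_Ioc] with s hs
      rw [norm_norm]
      exact F_bound T B hTcontr _ (by linarith [hs.1]) η
  have hsplit : ∫ s in Set.Ioc 0 τ, ‖B.adjoint ((T s).adjoint η)‖ ≤
      (∫ s in Set.Ioc 0 t, ‖B.adjoint ((T s).adjoint η)‖) + (τ - t) * (‖B‖ * ‖η‖) := by
    rw [← intervalIntegral.integral_of_le hτ.le, ← intervalIntegral.integral_of_le ht0.le,
      ← intervalIntegral.integral_add_adjacent_intervals (hI 0 t le_rfl ht0.le)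
        (hI t τ ht0.le htτ.le)]
    have := intervalIntegral.integral_mono_on htτ.le (hI t τ ht0.le htτ.le)
      (intervalIntegrable_const (c := ‖B‖ * ‖η‖)) (fun s hs => F_bound T B hTcontr s
        (by linarith [hs.1]) η)
    rw [intervalIntegral.integral_const, smul_eq_mul] at this
    linarith
  rw [G_refl T B τ hτ.le] at hdη
  rw [G_refl T B t ht0.le] at hsep
  have hs0 : 0 ≤ ∫ s in Set.Ioc 0 t, ‖B.adjoint ((T s).adjoint η)‖ :=
    integral_nonneg fun _ => norm_nonneg _
  generalize (∫ s in Set.Ioc 0 t, ‖B.adjoint ((T s).adjoint η)‖) = s at *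
  generalize (∫ s in Set.Ioc 0 τ, ‖B.adjoint ((T s).adjoint η)‖) = s' at *
  have hP1 : ⟪η, T t ψ⟫ ≤ ⟪η, T τ ψ⟫ + ‖T t ψ - T τ ψ‖ * ‖η‖ := by
    have := real_inner_le_norm η (T t ψ - T τ ψ)
    rw [inner_sub_right] at this
    linarith
  have hP2 : ⟪η, T t ψ⟫ ≤ ‖ψ‖ * (K τ + 1) * s := by
    rw [← ContinuousLinearMap.adjoint_inner_left]
    refine (real_inner_le_norm _ _).trans ?_
    rw [mul_comm, mul_assoc]
    refine mul_le_mul_of_nonneg_left (hobt.trans ?_) (norm_nonneg _)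
    exact mul_le_mul_of_nonneg_right hKt.le hs0
  have hms := mul_le_mul_of_nonneg_left hsplit hm
  set L := ‖ψ‖ * (K τ + 1) with hL
  have hL0 : 0 ≤ L := by positivity
  set ε := ‖T t ψ - T τ ψ‖ + m * ((τ - t) * ‖B‖) with hεd
  have hε0 : 0 ≤ ε := by
    have : 0 ≤ τ - t := by linarith
    positivity
  have k1 : (M - m) * s ≤ ε * ‖η‖ := by
    rw [hεd]; nlinarith
  have k2 : r * ‖η‖ ≤ L * s := by nlinarith
  have hspos : 0 < s := by
    rcases hs0.eq_or_lt with h | h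
    · rw [← h] at k2; nlinarith
    · exact h
  have k3 : (M - m) * r * s ≤ ε * L * s := by nlinarith
  nlinarith

end Helpers

/-- (Representation of the time optimal control.) Under the observability
and unique continuation assumptions, let `M > 0`, `τ*(M)` the optimal time of `(TP)^M` and
`η̂` the minimizer of `J^{τ*(M)}`. Then `η̂ ≠ 0` and the unique time optimal control is
`u*(t) = M · B*T*_{τ*(M)-t}η̂ / ‖B*T*_{τ*(M)-t}η̂‖` for a.e. `t ∈ (0,τ*(M))`. -/
theorem stmt17 {X U : Type*} [NormedAddCommGroup X] [InnerProductSpace ℝ X] [CompleteSpace X]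
    [NormedAddCommGroup U] [InnerProductSpace ℝ U] [CompleteSpace U]
    (T : ℝ → X →L[ℝ] X) (B : U →L[ℝ] X)
    -- `T` is a `C₀`-semigroup of contractions (generated by `-A`)
    (hT0 : T 0 = 1)
    (hTadd : ∀ s t : ℝ, 0 ≤ s → 0 ≤ t → T (s + t) = (T s).comp (T t))
    (hTcont : ∀ x : X, Continuous fun t => T t x)
    (hTcontr : ∀ t : ℝ, 0 ≤ t → ‖T t‖ ≤ 1)
    -- the `L¹` observability inequality
    (K : ℝ → ℝ) (hK_pos : ∀ τ : ℝ, 0 < τ → 0 < K τ) (hK_cont : ContinuousOn K (Set.Ioi 0))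
    (hobs : ∀ τ : ℝ, 0 < τ → ∀ η : X,
      ‖(T τ).adjoint η‖ ≤ K τ * ∫ t in Set.Ioc 0 τ, ‖B.adjoint ((T t).adjoint η)‖)
    -- unique continuation
    (hUC : ∀ η : X, ∀ s : Set ℝ, MeasurableSet s → 0 < volume s →
      (∀ t ∈ s, B.adjoint ((T t).adjoint η) = 0) → η = 0)
    (r M : ℝ) (hr : 0 < r) (hM : 0 < M)
    (ψ : X) (hψ : ψ ∉ Metric.closedBall (0 : X) r)
    -- `τ*(M)` is the optimal time for `(TP)^M`
    (τs : ℝ)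
    (hτs : IsLeast {t : ℝ | 0 ≤ t ∧ ∃ u : ℝ → U, admissible M u ∧
      traj T B ψ u t ∈ Metric.closedBall (0 : X) r} τs)
    -- `η̂` is the minimizer of `J^{τ*(M)}`
    (ηh : X) (hηh : ∀ ξ : X, Jfun T B r ψ τs ηh ≤ Jfun T B r ψ τs ξ) :
    ηh ≠ 0 ∧
    ∀ us : ℝ → U, (∀ t : ℝ,
        us t = M • (‖B.adjoint ((T (τs - t)).adjoint ηh)‖⁻¹ •
          B.adjoint ((T (τs - t)).adjoint ηh))) →
      -- `u*` is a time optimal control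
      (admissible M us ∧ traj T B ψ us τs ∈ Metric.closedBall (0 : X) r) ∧
      -- and it is the unique one
      (∀ u : ℝ → U, admissible M u → traj T B ψ u τs ∈ Metric.closedBall (0 : X) r →
        ∀ᵐ t ∂volume.restrict (Set.Ioo 0 τs), u t = us t) := by
  have hτ0 : 0 < τs := by
    obtain ⟨⟨h0, u, hu, hz⟩, -⟩ := hτs
    rcases h0.eq_or_lt with h | h
    · exfalso
      rw [← h] at hz
      apply hψ
      simpa [traj, hT0] using hz
    · exact h
  set G : X → ℝ := fun η => ∫ t in Set.Ioc 0 τs, ‖B.adjoint ((T (τs - t)).adjoint η)‖ with hG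
  have hG0 : ∀ η, 0 ≤ G η := fun η => integral_nonneg fun _ => norm_nonneg _
  have hGs : ∀ (a : ℝ), 0 ≤ a → ∀ η, G (a • η) = a * G η := by
    intro a ha η
    simp only [hG, map_smul, norm_smul, Real.norm_of_nonneg ha]
    rw [integral_const_mul]
  have hJ : ∀ η, Jfun T B r ψ τs η = (1 / 2) * G η ^ 2 + (⟪η, T τs ψ⟫ + r * ‖η‖) := by
    intro η
    rw [Jfun, ContinuousLinearMap.adjoint_inner_right, real_inner_comm]
    ring
  have hJs : ∀ (a : ℝ), 0 ≤ a → ∀ η, Jfun T B r ψ τs (a • η) =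
      (1 / 2) * (a * G η) ^ 2 + a * (⟪η, T τs ψ⟫ + r * ‖η‖) := by
    intro a ha η
    rw [hJ, hGs a ha, real_inner_smul_left, norm_smul, Real.norm_of_nonneg ha]
    ring
  -- radial optimality condition
  have hrad : ⟪ηh, T τs ψ⟫ + r * ‖ηh‖ = - G ηh ^ 2 := by
    have h1 : ∀ a : ℝ, 0 ≤ a → (1 / 2) * G ηh ^ 2 + (⟪ηh, T τs ψ⟫ + r * ‖ηh‖) ≤
        (1 / 2) * (a * G ηh) ^ 2 + a * (⟪ηh, T τs ψ⟫ + r * ‖ηh‖) := by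
      intro a ha
      rw [← hJs a ha, ← hJ]
      exact hηh _
    generalize ⟪ηh, T τs ψ⟫ + r * ‖ηh‖ = p at h1
    generalize G ηh = g at h1
    -- derivative at `a = 1`
    have hmin : IsLocalMin (fun a : ℝ => (1 / 2) * (a * g) ^ 2 + a * p) 1 := by
      filter_upwards [lt_mem_nhds (show (0 : ℝ) < 1 by norm_num)] with a ha
      simpa using h1 a ha.le
    have hd : HasDerivAt (fun a : ℝ => (1 / 2) * (a * g) ^ 2 + a * p) (g ^ 2 + p) 1 := by
      have := ((((hasDerivAt_id (1 : ℝ)).mul_const g).pow 2).const_mul (1 / 2 : ℝ)).add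
        ((hasDerivAt_id (1 : ℝ)).mul_const p)
      have e : (1 / 2 : ℝ) * (((2 : ℕ) : ℝ) * (id (1 : ℝ) * g) ^ (2 - 1) * (1 * g)) + 1 * p =
          g ^ 2 + p := by
        simp only [id]; push_cast; ring
      rw [← e]
      exact this
    have := hmin.hasDerivAt_eq_zero hd
    linarith
  -- any optimal control
  have hany : ∀ u : ℝ → U, admissible M u → traj T B ψ u τs ∈ Metric.closedBall (0 : X) r →
      G ηh ^ 2 ≤ ∫ t in Set.Ioc 0 τs, ⟪u t, B.adjoint ((T (τs - t)).adjoint ηh)⟫ := by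
    intro u hu hz
    have h1 := pairing T B hTcont hTcontr ψ τs M u hu ηh
    have h2 : -(r * ‖ηh‖) ≤ ⟪ηh, traj T B ψ u τs⟫ := by
      have h3 := abs_le.1 (abs_real_inner_le_norm ηh (traj T B ψ u τs))
      rw [mem_closedBall_zero_iff] at hz
      have : ‖ηh‖ * ‖traj T B ψ u τs‖ ≤ ‖ηh‖ * r := by gcongr
      linarith [h3.1]
    linarith
  obtain ⟨u0, hu0, hz0⟩ := hτs.1.2
  have hle : G ηh ≤ M := by
    have h1 := hany u0 hu0 hz0
    have h2 := u_le T B hTcont hTcontr τs M u0 hu0 ηh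
    have h3 : G ηh ^ 2 ≤ M * G ηh := h1.trans h2
    rcases (hG0 ηh).eq_or_lt with h | h
    · rw [← h]; exact hM.le
    · nlinarith
  have hmM : G ηh = M := by
    by_contra hne
    have hlt : G ηh < M := lt_of_le_of_ne hle hne
    obtain ⟨t, ht0, htτ, u, hu, hz⟩ := earlier T B hTcont hTcontr K hK_pos hK_cont hobs ψ τs (G ηh)
      M r hτ0 (hG0 ηh) hlt hr (by
        intro η
        have h1 : ∀ a : ℝ, 0 ≤ a → - (1 / 2) * G ηh ^ 2 ≤
            (1 / 2) * (a * G (-η)) ^ 2 + a * (⟪-η, T τs ψ⟫ + r * ‖-η‖) := by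
          intro a ha
          have h2 := hηh (a • (-η))
          rw [hJs a ha, hJ, hrad] at h2
          linarith
        have hGn : G (-η) = G η := by simp [hG]
        rw [hGn, norm_neg, inner_neg_left] at h1
        change ⟪η, T τs ψ⟫ ≤ G ηh * G η + r * ‖η‖
        have hg := hG0 η
        have hm0 := hG0 ηh
        generalize G ηh = m at *
        generalize G η = g at *
        by_contra hcon
        push Not at hcon
        have hp : 0 < ⟪η, T τs ψ⟫ - r * ‖η‖ - m * g := by linarith
        generalize hq : ⟪η, T τs ψ⟫ - r * ‖η‖ = q at *
        have h3 : ∀ a : ℝ, 0 ≤ a → - (1 / 2) * m ^ 2 ≤ (1 / 2) * (a * g) ^ 2 - a * q := by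
          intro a ha
          have := h1 a ha
          rw [← hq]; linarith
        have hqp : 0 < q := by nlinarith [mul_nonneg hm0 hg]
        rcases hg.eq_or_lt with h | h
        · have := h3 ((m ^ 2 + 1) / q) (by positivity)
          rw [div_mul_cancel₀ _ hqp.ne', ← h] at this
          nlinarith
        · have := h3 (q / g ^ 2) (by positivity)
          have e : (1 / 2) * (q / g ^ 2 * g) ^ 2 - q / g ^ 2 * q = - (1 / 2) * (q / g) ^ 2 := by
            field_simp; ring
          rw [e] at this
          have h5 : m < q / g := by rw [lt_div_iff₀ h]; linarith
          nlinarith)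
    exact absurd (hτs.2 ⟨ht0.le, u, hu, hz⟩) (not_le.2 htτ)
  have hη0 : ηh ≠ 0 := by
    intro h
    rw [h] at hmM
    simp [hG] at hmM
    linarith
  refine ⟨hη0, fun us hus => ?_⟩
  have hus' : us = fun t => M • (‖B.adjoint ((T (τs - t)).adjoint ηh)‖⁻¹ •
          B.adjoint ((T (τs - t)).adjoint ηh)) := funext hus
  have hadm : admissible M us := by
    rw [hus']; exact bang_adm T B hTcont τs M M (by rw [abs_of_pos hM]) ηh
  -- nonvanishing
  have hnv : ∀ᵐ t ∂(volume : Measure ℝ), B.adjoint ((T (τs - t)).adjoint ηh) ≠ 0 := by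
    set s : Set ℝ := {t | B.adjoint ((T t).adjoint ηh) = 0} with hs
    have hcl : MeasurableSet s := by
      have : s = ⋂ y : U, {t | ⟪ηh, T t (B y)⟫ = 0} := by
        ext t
        simp only [hs, Set.mem_ofPred_eq, Set.mem_iInter, ← ContinuousLinearMap.adjoint_inner_left]
        constructor
        · intro h y
          simp [h]
        · intro h
          exact inner_self_eq_zero.1 (h _)
      rw [this]
      exact (isClosed_iInter fun y => isClosed_eq (continuous_const.inner (hTcont (B y)))
        continuous_const).measurableSet
    have h0 : volume s = 0 := by
      by_contra hne
      exact hη0 (hUC ηh s hcl (pos_iff_ne_zero.2 hne) fun t ht => ht)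
    have := (Measure.measurePreserving_sub_left (volume : Measure ℝ) τs).quasiMeasurePreserving.ae
      (measure_eq_zero_iff_ae_notMem.1 h0)
    exact this
  have huniq : ∀ u : ℝ → U, admissible M u → traj T B ψ u τs ∈ Metric.closedBall (0 : X) r →
      ∀ᵐ t ∂volume.restrict (Set.Ioc 0 τs), u t = us t := by
    intro u hu hz
    have h1 := hany u hu hz
    have hi1 := u_int T B hTcont hTcontr τs M u hu ηh
    have hi2 := (F_int T B hTcont hTcontr τs ηh).const_mul M
    have hnn : 0 ≤ᵐ[volume.restrict (Set.Ioc 0 τs)] fun t =>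
        M * ‖B.adjoint ((T (τs - t)).adjoint ηh)‖ -
          ⟪u t, B.adjoint ((T (τs - t)).adjoint ηh)⟫ := by
      filter_upwards [adm_ae hu τs] with t ht
      have h2 := real_inner_le_norm (u t) (B.adjoint ((T (τs - t)).adjoint ηh))
      have h3 : ‖u t‖ * ‖B.adjoint ((T (τs - t)).adjoint ηh)‖ ≤
        M * ‖B.adjoint ((T (τs - t)).adjoint ηh)‖ := by gcongr
      simp only [Pi.zero_apply]
      linarith
    have h4 : ∫ t in Set.Ioc 0 τs, (M * ‖B.adjoint ((T (τs - t)).adjoint ηh)‖ -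
          ⟪u t, B.adjoint ((T (τs - t)).adjoint ηh)⟫) = 0 := by
      refine le_antisymm ?_ (integral_nonneg_of_ae hnn)
      rw [integral_sub hi2 hi1, integral_const_mul]
      change M * G ηh - _ ≤ 0
      rw [hmM] at h1 ⊢
      nlinarith
    rw [integral_eq_zero_iff_of_nonneg_ae hnn (hi2.sub hi1)] at h4
    filter_upwards [h4, adm_ae hu τs, ae_restrict_of_ae hnv] with t e1 e2 e3
    rw [hus t]
    set f := B.adjoint ((T (τs - t)).adjoint ηh) with hf
    have hfp : 0 < ‖f‖ := norm_pos_iff.2 e3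
    simp only [Pi.zero_apply] at e1
    have h5 : ‖u t - M • (‖f‖⁻¹ • f)‖ ^ 2 ≤ 0 := by
      rw [norm_sub_sq_real, real_inner_smul_right, real_inner_smul_right, norm_smul, norm_smul,
        norm_inv, norm_norm, inv_mul_cancel₀ hfp.ne', Real.norm_of_nonneg hM.le,
        show ⟪u t, f⟫ = M * ‖f‖ by linarith]
      have : M * (‖f‖⁻¹ * (M * ‖f‖)) = M ^ 2 := by field_simp
      rw [this]
      nlinarith [norm_nonneg (u t)]
    have h6 : ‖u t - M • (‖f‖⁻¹ • f)‖ = 0 := by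
      nlinarith [norm_nonneg (u t - M • (‖f‖⁻¹ • f))]
    exact sub_eq_zero.1 (norm_eq_zero.1 h6)
  refine ⟨⟨hadm, ?_⟩, fun u hu hz => ae_restrict_of_ae_restrict_of_subset
    Set.Ioo_subset_Ioc_self (huniq u hu hz)⟩
  have : traj T B ψ us τs = traj T B ψ u0 τs := by
    unfold traj
    congr 1
    refine integral_congr_ae ?_
    filter_upwards [huniq u0 hu0 hz0] with t ht
    rw [ht]
  rw [this]
  exact hz0
end
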